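/- Let G = ∗_{i∈I} G_i be the free product of a family of left-orderable groups G_i, let A and B be finitely generated free subgroups of G each of which intersects every conjugate gG_ig⁻¹ of every free factor trivially, and let S be a system of representatives of the double cosets AsB in G. Then ∑_{s∈S} r̄ank(A ∩ sBs⁻¹) ≤ r̄ank(A) · r̄ank(B); in particular, r̄ank(A ∩ B) ≤ r̄ank(A) · r̄ank(B). -/

import Mathlib

open scoped ENNReal

/-- The rank of a group `H` (as an element of `ℝ≥0∞`): the minimal cardinality of a
finite generating set of `H`, or `⊤` if `H` is not finitely generated. -/
noncomputable def grank (H : Type*) [Group H] : ℝ≥0∞ :=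
  sInf {x : ℝ≥0∞ | ∃ s : Finset H, Subgroup.closure (s : Set H) = ⊤ ∧ x = s.card}

/-!
A left order on the free product makes the set of edges of its Bass–Serre tree a totally ordered set
on which the free product acts freely and monotonically. For a free group `H` acting freely on a
tree with ordered edges, call an edge a bridge if it is the greatest edge of a line joining two
distinct tame ends, these being limits of powers `h ^ n` along which the edges decrease.

The number of `H`-orbits of bridges is the reduced rank of `H`. Deleting the bridges leaves pieces
with cyclic stabilizers, so `H` is generated by at most one element more than there are orbits of
bridges. Conversely, in a subtree which is finite modulo `H` each vertex has a first edge towards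
the tame end in its piece; this embeds the orbits of vertices into the orbits of edges other than
bridges, and an Euler characteristic count bounds the orbits of bridges by the reduced rank.

A bridge `e` of `A ∩ sBs⁻¹` is a bridge of `A`, and `s⁻¹e` is a bridge of `B`. As the action is free
on edges, the orbits of `e` under `A` and of `s⁻¹e` under `B` determine `s` and the orbit of `e`
under `A ∩ sBs⁻¹`, which gives the inequality.
-/

open Filter

/-! ### Lines and tame sets of edges -/

/-- For two infinite paths of a tree with the same origin, given by the characteristic functions of
their sets of edges, the set of edges of the line joining their ends. -/
def line {E : Type*} (ξ η : E → ZMod 2) : Set E := {e | ξ e ≠ η e}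

theorem line_comm {E : Type*} (ξ η : E → ZMod 2) : line ξ η = line η ξ :=
  Set.ext fun _ => ne_comm

section OrderedAction

variable {G E : Type*} [Group G] [MulAction G E] [LinearOrder E]
  [CovariantClass G E HSMul.hSMul LE.le]

theorem strictMono_smul_of_covariant (g : G) : StrictMono (g • · : E → E) :=
  (smul_mono_right g).strictMono_of_injective (MulAction.injective g)

theorem strictAnti_pow_smul {g : G} {e : E} (h : g • e < e) :
    StrictAnti fun n : ℕ => g ^ n • e :=
  strictAnti_nat_of_succ_lt fun n => by
    simpa only [pow_succ, mul_smul] using strictMono_smul_of_covariant (g ^ n) h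

theorem strictMono_pow_smul {g : G} {e : E} (h : e < g • e) :
    StrictMono fun n : ℕ => g ^ n • e :=
  strictMono_nat_of_lt_succ fun n => by
    simpa only [pow_succ, mul_smul] using strictMono_smul_of_covariant (g ^ n) h

theorem injective_pow_smul_of_ordered [IsCancelSMul G E] {g : G} (hg : g ≠ 1) (e : E) :
    Function.Injective fun n : ℕ => g ^ n • e := by
  rcases lt_trichotomy (g • e) e with h | h | h
  · exact (strictAnti_pow_smul h).injective
  · exact absurd (IsCancelSMul.eq_one_of_smul h) hg
  · exact (strictMono_pow_smul h).injective

/-- A set of edges is tame if it has infinitely many elements exceeded by only finitely many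
elements of the set. -/
def IsTame (S : Set E) : Prop :=
  {m ∈ S | {e ∈ S | m < e}.Finite}.Infinite

theorem IsTame.of_finite_diff {S S' : Set E} (hS : IsTame S) (h : (S \ S').Finite)
    (h' : (S' \ S).Finite) : IsTame S' := by
  refine (hS.sdiff h).mono ?_
  rintro m ⟨⟨hm, hfin⟩, hmS⟩
  refine ⟨by_contra fun hc => hmS ⟨hm, hc⟩, (hfin.union h').subset ?_⟩
  rintro e ⟨he, hlt⟩
  exact or_iff_not_imp_right.mpr fun hc => ⟨by_contra fun heS => hc ⟨he, heS⟩, hlt⟩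

theorem IsTame.image {F : Type*} [LinearOrder F] {S : Set E} (hS : IsTame S) {f : E → F}
    (hf : StrictMono f) : IsTame (f '' S) := by
  refine (Set.Infinite.image hf.injective.injOn hS).mono ?_
  rintro _ ⟨m, ⟨hm, hfin⟩, rfl⟩
  refine ⟨Set.mem_image_of_mem f hm, (hfin.image f).subset ?_⟩
  rintro _ ⟨⟨e, he, rfl⟩, hlt⟩
  exact Set.mem_image_of_mem f ⟨he, hf.lt_iff_lt.mp hlt⟩

theorem IsTame.exists_isGreatest_line {ξ η : E → ZMod 2}
    (hξ : IsTame (Function.support ξ)) (hη : IsTame (Function.support η))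
    (hfin : (Function.support ξ ∩ Function.support η).Finite) :
    ∃ e, IsGreatest (line ξ η) e := by
  obtain ⟨m₁, ⟨hm₁, hfin₁⟩, hn₁⟩ := (Set.Infinite.sdiff hξ hfin).nonempty
  obtain ⟨m₂, ⟨hm₂, hfin₂⟩, hn₂⟩ := (Set.Infinite.sdiff hη hfin).nonempty
  have hd₁ : ξ m₁ ≠ η m₁ := fun h => hn₁ ⟨hm₁, fun h' => hm₁ (h.trans h')⟩
  have hd₂ : ξ m₂ ≠ η m₂ := fun h => hn₂ ⟨fun h' => hm₂ (h.symm.trans h'), hm₂⟩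
  have hd : max m₁ m₂ ∈ line ξ η := by
    rcases max_choice m₁ m₂ with h | h <;> rw [h] <;> assumption
  have hupper : {f | f ∈ line ξ η ∧ max m₁ m₂ ≤ f}.Finite := by
    refine ((hfin₁.union hfin₂).insert (max m₁ m₂)).subset ?_
    rintro f ⟨hf, hle⟩
    rcases hle.eq_or_lt with heq | hlt
    · exact Or.inl heq.symm
    · obtain ⟨hl₁, hl₂⟩ := max_lt_iff.mp hlt
      by_cases h0 : ξ f = 0
      · exact Or.inr (Or.inr ⟨fun h' => hf (h0.trans h'.symm), hl₂⟩)
      · exact Or.inr (Or.inl ⟨h0, hl₁⟩)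
  obtain ⟨e, he, hmax⟩ := Set.exists_max_image _ id hupper ⟨_, hd, le_rfl⟩
  refine ⟨e, he.1, fun f hf => le_of_not_gt fun hlt => ?_⟩
  exact absurd (hmax f ⟨hf, he.2.trans hlt.le⟩) (not_le.mpr hlt)

end OrderedAction

section Boundary

variable {V E : Type*}

/-- The boundary operator, with mod 2 coefficients, of the graph with incidence maps `src` and
`tgt`. -/
noncomputable def boundary (src tgt : E → V) : (E →₀ ZMod 2) →ₗ[ZMod 2] (V →₀ ZMod 2) :=
  Finsupp.lmapDomain _ _ src + Finsupp.lmapDomain _ _ tgt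

theorem boundary_single (src tgt : E → V) (e : E) (c : ZMod 2) :
    boundary src tgt (Finsupp.single e c) =
      Finsupp.single (src e) c + Finsupp.single (tgt e) c := by
  simp [boundary]

theorem boundary_mapDomain {V' E' : Type*} {src tgt : E → V} {src' tgt' : E' → V'} {p : V → V'}
    {q : E → E'} (hsrc : ∀ e, src' (q e) = p (src e)) (htgt : ∀ e, tgt' (q e) = p (tgt e))
    (c : E →₀ ZMod 2) :
    boundary src' tgt' (c.mapDomain q) = (boundary src tgt c).mapDomain p := by
  simp only [boundary, LinearMap.add_apply, Finsupp.lmapDomain_apply, Finsupp.mapDomain_add,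
    ← Finsupp.mapDomain_comp, Function.comp_def, hsrc, htgt]

theorem linearCombination_boundary (src tgt : E → V) (χ : V → ZMod 2) (c : E →₀ ZMod 2) :
    Finsupp.linearCombination (ZMod 2) χ (boundary src tgt c) =
      Finsupp.linearCombination (ZMod 2) (fun e => χ (src e) + χ (tgt e)) c := by
  induction c using Finsupp.induction_linear with
  | zero => simp only [map_zero]
  | add c d hc hd => simp only [map_add, hc, hd]
  | single e x => simp [boundary_single, mul_add]

end Boundary

/-! ### Trees with a group action -/

/-- A tree with an action of `G` by automorphisms preserving the orientations of the edges: a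
connected graph together with, for each vertex `v`, the mod 2 chain `path v` of the edges on the
path from `base` to `v`. Chains with the properties `path_base` and `path_tgt` exist in a connected
graph only if it has no circuits. -/
structure GTree (G V E : Type*) [Group G] [MulAction G V] [MulAction G E] where
  src : E → V
  tgt : E → V
  src_smul : ∀ (g : G) e, src (g • e) = g • src e
  tgt_smul : ∀ (g : G) e, tgt (g • e) = g • tgt e
  base : V
  path : V → E →₀ ZMod 2
  path_base : path base = 0
  path_tgt : ∀ e, path (tgt e) = path (src e) + Finsupp.single e 1
  connected : ∀ Z : Set V, base ∈ Z → (∀ e, src e ∈ Z ↔ tgt e ∈ Z) → ∀ v, v ∈ Z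

namespace GTree

variable {G V E : Type*} [Group G] [MulAction G V] [MulAction G E] (T : GTree G V E)

/-- The same tree, with the action of a subgroup. -/
def restrict (H : Subgroup G) : GTree H V E where
  src := T.src
  tgt := T.tgt
  src_smul g := T.src_smul g
  tgt_smul g := T.tgt_smul g
  base := T.base
  path := T.path
  path_base := T.path_base
  path_tgt := T.path_tgt
  connected := T.connected

theorem path_smul (g : G) (v : V) :
    T.path (g • v) = T.path (g • T.base) + (T.path v).mapDomain (g • ·) := by
  refine T.connected {v | T.path (g • v) = T.path (g • T.base) +
    (T.path v).mapDomain (g • ·)} ?_ ?_ v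
  · simp [T.path_base]
  · intro e
    have h := T.path_tgt (g • e)
    rw [T.src_smul, T.tgt_smul] at h
    simp only [Set.mem_ofPred_eq, h, T.path_tgt, Finsupp.mapDomain_add, Finsupp.mapDomain_single,
      ← add_assoc, add_left_inj]

/-- The action of `g` on chains, possibly infinite, seen as starting at the base vertex: the image
under `g` of a path from `base`, preceded by the path from `base` to `g • base`. -/
def translate (g : G) (ξ : E → ZMod 2) : E → ZMod 2 :=
  fun e => T.path (g • T.base) e + ξ (g⁻¹ • e)

theorem coe_path_smul (g : G) (v : V) : ⇑(T.path (g • v)) = T.translate g (T.path v) := by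
  funext e
  rw [path_smul, Finsupp.add_apply, translate]
  congr 1
  conv_lhs => rw [← smul_inv_smul g e]
  exact Finsupp.mapDomain_apply (MulAction.injective g) _ _

theorem path_smul_apply (g : G) (v : V) (e : E) :
    T.path (g • v) e = T.path (g • T.base) e + T.path v (g⁻¹ • e) :=
  congrFun (T.coe_path_smul g v) e

theorem translate_one (ξ : E → ZMod 2) : T.translate 1 ξ = ξ := by
  funext e
  simp [translate, T.path_base]

theorem translate_mul (g h : G) (ξ : E → ZMod 2) :
    T.translate (g * h) ξ = T.translate g (T.translate h ξ) := by
  funext e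
  simp only [translate, mul_smul, T.path_smul_apply g (h • T.base), mul_inv_rev, add_assoc]

theorem mem_line_translate (g : G) (ξ η : E → ZMod 2) (e : E) :
    e ∈ line (T.translate g ξ) (T.translate g η) ↔ g⁻¹ • e ∈ line ξ η := by
  simp only [line, translate, Set.mem_ofPred_eq, ne_eq, add_right_inj]

theorem path_inv_smul_base (g : G) (e : E) :
    T.path (g⁻¹ • T.base) e = T.path (g • T.base) (g • e) := by
  have h := T.path_smul_apply g (g⁻¹ • T.base) (g • e)
  rw [smul_inv_smul, T.path_base, inv_smul_smul] at h
  exact (CharTwo.add_eq_zero.mp h.symm).symm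

theorem boundary_path (v : V) :
    boundary T.src T.tgt (T.path v) = Finsupp.single v 1 + Finsupp.single T.base 1 := by
  refine T.connected {v | boundary T.src T.tgt (T.path v) =
    Finsupp.single v 1 + Finsupp.single T.base 1} ?_ (fun e => ?_) v
  · rw [Set.mem_ofPred_eq, T.path_base, map_zero, ZModModule.add_self]
  · rw [Set.mem_ofPred_eq, Set.mem_ofPred_eq, T.path_tgt, map_add, boundary_single, ←
      add_left_inj (Finsupp.single (T.src e) 1 + Finsupp.single (T.tgt e) 1), add_add_add_comm,
      ZModModule.add_self, zero_add, add_comm (Finsupp.single T.base 1)]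

/-- The set of edges joining `C` to its complement. -/
def cut (C : Set V) : Set E := {e | ¬(T.src e ∈ C ↔ T.tgt e ∈ C)}

open Classical in
theorem sum_path_of_cut {C : Set V} {D : Finset E} {v : V}
    (hD : ∀ e ∈ (T.path v).support, e ∈ T.cut C → e ∈ D) (hDC : ∀ e ∈ D, e ∈ T.cut C) :
    ∑ e ∈ D, T.path v e = (if v ∈ C then 1 else 0) + (if T.base ∈ C then 1 else 0) := by
  have hcut (e : E) : ((if T.src e ∈ C then 1 else 0) + (if T.tgt e ∈ C then 1 else 0) : ZMod 2) =
      if e ∈ T.cut C then 1 else 0 := by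
    by_cases hs : T.src e ∈ C <;> by_cases ht : T.tgt e ∈ C <;>
      simp [cut, hs, ht, CharTwo.add_self_eq_zero]
  have h := linearCombination_boundary T.src T.tgt (fun w => if w ∈ C then 1 else 0) (T.path v)
  simp only [hcut, boundary_path, map_add, Finsupp.linearCombination_single, one_smul] at h
  rw [h, Finsupp.linearCombination_apply, Finsupp.sum]
  simp only [smul_eq_mul, mul_ite, mul_one, mul_zero, ← Finset.sum_filter]
  refine (Finset.sum_subset (fun e he => ?_) fun e he hne => ?_).symm
  · exact hD e (Finset.mem_filter.mp he).1 (Finset.mem_filter.mp he).2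
  · by_contra h0
    exact hne (Finset.mem_filter.mpr ⟨Finsupp.mem_support_iff.mpr h0, hDC e he⟩)

theorem support_path_nonempty {v : V} (hv : v ≠ T.base) : (T.path v).support.Nonempty := by
  rw [Finsupp.support_nonempty_iff]
  intro h0
  have h := T.boundary_path v
  rw [h0, map_zero, eq_comm, ← ZModModule.sub_eq_add, sub_eq_zero] at h
  exact hv (Finsupp.single_left_injective one_ne_zero h)

/-- The vertices `h ^ n • base` converge to the infinite path `ξ`. -/
def IsLimit (h : G) (ξ : E → ZMod 2) : Prop :=
  ∀ e, ∀ᶠ n : ℕ in atTop, T.path (h ^ n • T.base) e = ξ e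

theorem path_pow_succ_smul (h : G) (n : ℕ) (e : E) :
    T.path (h ^ (n + 1) • T.base) e =
      T.path (h ^ n • T.base) e + T.path (h • T.base) ((h ^ n)⁻¹ • e) := by
  rw [pow_succ, mul_smul, T.path_smul_apply]

variable {T}

namespace IsLimit

variable {h : G} {ξ : E → ZMod 2}

theorem unique {η : E → ZMod 2} (hξ : T.IsLimit h ξ) (hη : T.IsLimit h η) : ξ = η := by
  funext e
  obtain ⟨n, h1, h2⟩ := ((hξ e).and (hη e)).exists
  exact h1.symm.trans h2

theorem pow (hξ : T.IsLimit h ξ) {a : ℕ} (ha : 0 < a) : T.IsLimit (h ^ a) ξ := by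
  intro e
  have hmul : Tendsto (fun n : ℕ => a * n) atTop atTop := tendsto_id.const_mul_atTop' ha
  filter_upwards [hmul.eventually (hξ e)] with n hn
  rw [← pow_mul, hn]

theorem translate_eq (hξ : T.IsLimit h ξ) : T.translate h ξ = ξ := by
  funext e
  obtain ⟨n, h1, h2⟩ :=
    (((tendsto_add_atTop_nat 1).eventually (hξ e)).and (hξ (h⁻¹ • e))).exists
  rw [translate, ← h1, ← h2, pow_succ', mul_smul, T.path_smul_apply h (h ^ n • T.base)]

theorem exists_pow_smul_eq (hξ : T.IsLimit h ξ) {e : E} (he : ξ e ≠ 0) :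
    ∃ n : ℕ, ∃ f ∈ (T.path (h • T.base)).support, h ^ n • f = e := by
  by_contra! hc
  have hpath (n : ℕ) : T.path (h ^ n • T.base) e = 0 := by
    induction n with
    | zero => simp [T.path_base]
    | succ n ih =>
      rw [T.path_pow_succ_smul, ih, zero_add]
      by_contra h0
      exact hc n _ (Finsupp.mem_support_iff.mpr h0) (smul_inv_smul _ _)
  obtain ⟨n, hn⟩ := (hξ e).exists
  exact he (hn ▸ hpath n)

end IsLimit

variable [LinearOrder E] [CovariantClass G E HSMul.hSMul LE.le] [IsCancelSMul G E]

theorem injective_pow_smul_vertex [IsCancelSMul G V] (T : GTree G V E) {h : G} (h1 : h ≠ 1)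
    (v : V) : Function.Injective fun n : ℕ => h ^ n • v := by
  obtain ⟨e, -⟩ := T.support_path_nonempty
    (v := h • T.base) fun hbase => h1 (IsCancelSMul.eq_one_of_smul hbase)
  intro m n hmn
  exact injective_pow_smul_of_ordered h1 e
    (congrArg (· • e) (IsCancelSMul.right_cancel _ _ _ hmn))

theorem eventually_pow_smul_notMem [IsCancelSMul G V] (T : GTree G V E) {h : G} (h1 : h ≠ 1)
    (v : V) {C : Set V} (hC : C.Finite) : ∀ᶠ n : ℕ in atTop, h ^ n • v ∉ C := by
  rw [← Nat.cofinite_eq_atTop]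
  exact (hC.preimage (T.injective_pow_smul_vertex h1 v).injOn).compl_mem_cofinite

theorem eventually_apply_inv_pow_smul_eq_zero {h : G} (h1 : h ≠ 1) (c : E →₀ ZMod 2) (e : E) :
    ∀ᶠ n : ℕ in atTop, c ((h ^ n)⁻¹ • e) = 0 := by
  have hfin : {n : ℕ | (h⁻¹) ^ n • e ∈ (c.support : Set E)}.Finite :=
    c.support.finite_toSet.preimage
      (injective_pow_smul_of_ordered (inv_ne_one.mpr h1) e).injOn
  rw [← Nat.cofinite_eq_atTop]
  filter_upwards [hfin.compl_mem_cofinite] with n hn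
  simpa using hn

theorem exists_isLimit (T : GTree G V E) {h : G} (h1 : h ≠ 1) : ∃ ξ, T.IsLimit h ξ := by
  have hconst (e : E) : ∃ c, ∀ᶠ n : ℕ in atTop, T.path (h ^ n • T.base) e = c := by
    obtain ⟨N, hN⟩ := eventually_atTop.mp
      (eventually_apply_inv_pow_smul_eq_zero h1 (T.path (h • T.base)) e)
    refine ⟨T.path (h ^ N • T.base) e, eventually_atTop.mpr ⟨N, fun n hn => ?_⟩⟩
    induction n, hn using Nat.le_induction with
    | base => rfl
    | succ n hn ih => rw [T.path_pow_succ_smul, hN n hn, add_zero, ih]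
  choose ξ hξ using hconst
  exact ⟨ξ, hξ⟩

namespace IsLimit

variable {h : G} {ξ ξ' : E → ZMod 2}

theorem eventually_path_smul (hξ : T.IsLimit h ξ) (h1 : h ≠ 1) (v : V) (e : E) :
    ∀ᶠ n : ℕ in atTop, T.path (h ^ n • v) e = ξ e := by
  filter_upwards [hξ e, eventually_apply_inv_pow_smul_eq_zero h1 (T.path v) e] with n hn hn0
  rw [T.path_smul_apply, hn, hn0, add_zero]

theorem conj (hξ : T.IsLimit h ξ) (h1 : h ≠ 1) (g : G) :
    T.IsLimit (g * h * g⁻¹) (T.translate g ξ) := by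
  intro e
  filter_upwards [hξ.eventually_path_smul h1 (g⁻¹ • T.base) (g⁻¹ • e)] with n hn
  rw [conj_pow, mul_smul, mul_smul, T.path_smul_apply, hn, translate]

theorem eventually_inv_smul_eq_zero (hξ : T.IsLimit h ξ) (h1 : h ≠ 1) (e : E) :
    ∀ᶠ n : ℕ in atTop, ξ ((h ^ n)⁻¹ • e) = 0 := by
  -- `ξ` is supported on the forward orbits of finitely many edges `f`, and the backward orbit of
  -- `e` meets the forward orbit of each `f` at most finitely often.
  have hfar : ∀ f ∈ (T.path (h • T.base)).support,
      ∀ᶠ n : ℕ in atTop, ∀ k : ℕ, h ^ k • f ≠ (h ^ n)⁻¹ • e := by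
    intro f _
    by_cases hf : ∃ m : ℕ, h ^ m • f = e
    · obtain ⟨m, rfl⟩ := hf
      filter_upwards [eventually_gt_atTop m] with n hn k hk
      rw [eq_inv_smul_iff, ← mul_smul, ← pow_add] at hk
      have := injective_pow_smul_of_ordered h1 f hk
      omega
    · refine Eventually.of_forall fun n k hk => hf ⟨n + k, ?_⟩
      rw [pow_add, mul_smul, hk, smul_inv_smul]
  filter_upwards [(Filter.eventually_all_finset _).mpr hfar] with n hn
  by_contra h0
  obtain ⟨k, f, hf, hk⟩ := hξ.exists_pow_smul_eq h0
  exact hn f hf k hk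

theorem infinite_support [IsCancelSMul G V] (hξ : T.IsLimit h ξ) (h1 : h ≠ 1) :
    (Function.support ξ).Infinite := by
  intro hfin
  let x : E →₀ ZMod 2 := Finsupp.ofSupportFinite ξ hfin
  have hx : x = T.path (h • T.base) + x.mapDomain (h • ·) := by
    ext e
    rw [Finsupp.add_apply, ← smul_inv_smul h e, Finsupp.mapDomain_apply (MulAction.injective h),
      smul_inv_smul]
    exact (congrFun hξ.translate_eq e).symm
  -- `c` is invariant under `h`, although it is finite and has an odd number of vertices.
  set c : V →₀ ZMod 2 := boundary T.src T.tgt x + Finsupp.single T.base 1 with hc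
  have hinv : c.mapDomain (h • ·) = c := by
    have hb := congrArg (boundary T.src T.tgt) hx
    rw [map_add, T.boundary_path, boundary_mapDomain (T.src_smul h) (T.tgt_smul h)] at hb
    rw [hc, Finsupp.mapDomain_add, Finsupp.mapDomain_single]
    conv_rhs => rw [hb, add_right_comm, add_assoc (Finsupp.single (h • T.base) 1),
      ZModModule.add_self, add_zero, add_comm]
  have hinvpow (n : ℕ) (v : V) : c (h ^ n • v) = c v := by
    induction n with
    | zero => rw [pow_zero, one_smul]
    | succ n ih =>
      rw [pow_succ', mul_smul, ← ih]
      conv_lhs => rw [← hinv]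
      exact Finsupp.mapDomain_apply (MulAction.injective h) _ _
  have hodd : Finsupp.linearCombination (ZMod 2) (fun _ : V => (1 : ZMod 2)) c = 1 := by
    rw [hc, map_add, linearCombination_boundary]
    simp [CharTwo.add_self_eq_zero, Finsupp.linearCombination_apply]
  have hc0 : c ≠ 0 := fun h0 => by simp [h0] at hodd
  obtain ⟨v, hv⟩ := Finsupp.support_nonempty_iff.mpr hc0
  obtain ⟨n, hn⟩ := (T.eventually_pow_smul_notMem h1 v c.support.finite_toSet).exists
  rw [Finset.mem_coe, Finsupp.mem_support_iff, hinvpow] at hn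
  exact hn (Finsupp.mem_support_iff.mp hv)

end IsLimit

end GTree

/-! ### Bridges -/

namespace GTree

variable {G V E : Type*} [Group G] [MulAction G V] [MulAction G E] {T : GTree G V E}

theorem IsLimit.smul_mem_line_iff {h : G} {ξ ξ' : E → ZMod 2} (hξ : T.IsLimit h ξ)
    (hξ' : T.IsLimit h⁻¹ ξ') (e : E) : h • e ∈ line ξ ξ' ↔ e ∈ line ξ ξ' := by
  have hfix : T.translate h ξ' = ξ' := by
    conv_lhs => rw [← hξ'.translate_eq, ← translate_mul, mul_inv_cancel, translate_one]
  conv_lhs => rw [← hξ.translate_eq, ← hfix, mem_line_translate, inv_smul_smul]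

theorem IsLimit.pow_smul_mem_line_iff {h : G} {ξ ξ' : E → ZMod 2} (hξ : T.IsLimit h ξ)
    (hξ' : T.IsLimit h⁻¹ ξ') (n : ℕ) (e : E) : h ^ n • e ∈ line ξ ξ' ↔ e ∈ line ξ ξ' := by
  induction n with
  | zero => rw [pow_zero, one_smul]
  | succ n ih => rw [pow_succ', mul_smul, hξ.smul_mem_line_iff hξ', ih]

theorem IsLimit.exists_pow_eq_pow [IsCancelSMul G E] {h k : G} {ξ η : E → ZMod 2}
    (hξ : T.IsLimit h ξ) (hη : T.IsLimit k η)
    (hinf : (Function.support ξ ∩ Function.support η).Infinite) :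
    ∃ a b : ℕ, 0 < a ∧ 0 < b ∧ h ^ a = k ^ b := by
  obtain ⟨p, hp⟩ : ∃ p : E × E, {e | ∃ n m : ℕ, h ^ n • p.1 = e ∧ k ^ m • p.2 = e}.Infinite := by
    by_contra! hc
    refine hinf (Set.Finite.subset (Set.Finite.biUnion (Finset.finite_toSet
      ((T.path (h • T.base)).support ×ˢ (T.path (k • T.base)).support)) fun p _ => hc p) ?_)
    rintro e ⟨he, he'⟩
    obtain ⟨n, f, hf, hn⟩ := hξ.exists_pow_smul_eq he
    obtain ⟨m, f', hf', hm⟩ := hη.exists_pow_smul_eq he'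
    exact Set.mem_biUnion (x := (f, f')) (Finset.mk_mem_product hf hf') ⟨n, m, hn, hm⟩
  obtain ⟨x, n, m, hn, hm⟩ := hp.nonempty
  have hfin : ((fun i : ℕ => h ^ i • p.1) '' Set.Iic n ∪
      (fun i : ℕ => k ^ i • p.2) '' Set.Iic m).Finite :=
    ((Set.finite_Iic n).image _).union ((Set.finite_Iic m).image _)
  obtain ⟨y, ⟨n', m', hn', hm'⟩, hy⟩ := (hp.sdiff hfin).nonempty
  have hnn : n < n' := lt_of_not_ge fun hle => hy (Or.inl ⟨n', hle, hn'⟩)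
  have hmm : m < m' := lt_of_not_ge fun hle => hy (Or.inr ⟨m', hle, hm'⟩)
  refine ⟨n' - n, m' - m, by lia, by lia, IsCancelSMul.right_cancel _ _ x ?_⟩
  calc h ^ (n' - n) • x = y := by
        rw [← hn, ← mul_smul, ← pow_add, Nat.sub_add_cancel hnn.le, hn']
    _ = k ^ (m' - m) • x := by
        rw [← hm, ← mul_smul, ← pow_add, Nat.sub_add_cancel hmm.le, hm']

variable [LinearOrder E]

/-- The ends of the tree that are limits of the powers of a nontrivial element of `G`, the path
from the base vertex to the end being tame. -/
def IsTameEnd (T : GTree G V E) (ξ : E → ZMod 2) : Prop :=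
  ∃ h : G, h ≠ 1 ∧ T.IsLimit h ξ ∧ IsTame (Function.support ξ)

/-- The bridges: the edges that are greatest on a line joining two tame ends. -/
def bridges (T : GTree G V E) : Set E :=
  {e | ∃ ξ η, T.IsTameEnd ξ ∧ T.IsTameEnd η ∧ IsGreatest (line ξ η) e}

theorem IsTameEnd.exists_isGreatest_line [IsCancelSMul G E] {ξ η : E → ZMod 2}
    (hξ : T.IsTameEnd ξ) (hη : T.IsTameEnd η) (hne : ξ ≠ η) :
    ∃ e, IsGreatest (line ξ η) e := by
  obtain ⟨h, -, hξ, tξ⟩ := hξ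
  obtain ⟨k, -, hη, tη⟩ := hη
  by_cases hfin : (Function.support ξ ∩ Function.support η).Finite
  · exact tξ.exists_isGreatest_line tη hfin
  · obtain ⟨a, b, ha, hb, hab⟩ := hξ.exists_pow_eq_pow hη hfin
    exact absurd ((hξ.pow ha).unique (hab ▸ hη.pow hb)) hne

theorem IsTameEnd.eq_of_eqOn_bridges [IsCancelSMul G E] {ξ η : E → ZMod 2}
    (hξ : T.IsTameEnd ξ) (hη : T.IsTameEnd η) (h : Set.EqOn ξ η T.bridges) : ξ = η := by
  by_contra hne
  obtain ⟨e, he⟩ := hξ.exists_isGreatest_line hη hne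
  exact he.1 (h ⟨ξ, η, hξ, hη, he⟩)

theorem isGreatest_line_translate [CovariantClass G E HSMul.hSMul LE.le] (T : GTree G V E)
    (g : G) {ξ η : E → ZMod 2} {e : E} (he : IsGreatest (line ξ η) e) :
    IsGreatest (line (T.translate g ξ) (T.translate g η)) (g • e) := by
  refine ⟨by rw [mem_line_translate, inv_smul_smul]; exact he.1, fun f hf => ?_⟩
  rw [mem_line_translate] at hf
  simpa only [smul_inv_smul] using smul_mono_right g (he.2 hf)

theorem isTame_support_translate [CovariantClass G E HSMul.hSMul LE.le] (T : GTree G V E)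
    (g : G) {ξ : E → ZMod 2} (hξ : IsTame (Function.support ξ)) :
    IsTame (Function.support (T.translate g ξ)) := by
  have hsupp : (g • ·) '' Function.support ξ = {e | ξ (g⁻¹ • e) ≠ 0} :=
    (Set.preimage_smul_inv g (Function.support ξ)).symm
  have hoff {e : E} (he : e ∉ (T.path (g • T.base)).support) :
      T.translate g ξ e = ξ (g⁻¹ • e) := by
    rw [translate, Finsupp.notMem_support_iff.mp he, zero_add]
  refine (hξ.image (strictMono_smul_of_covariant g)).of_finite_diff
    ((T.path (g • T.base)).support.finite_toSet.subset ?_)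
    ((T.path (g • T.base)).support.finite_toSet.subset ?_) <;> rw [hsupp] <;>
    rintro e ⟨he, hne⟩ <;> by_contra hsup
  · exact hne fun h0 => he (hoff hsup ▸ h0)
  · exact hne fun h0 => he ((hoff hsup).trans h0)

variable [CovariantClass G E HSMul.hSMul LE.le] [IsCancelSMul G E]

namespace IsLimit

variable {h : G} {ξ ξ' : E → ZMod 2}

theorem eventually_mem_support_iff (hξ : T.IsLimit h ξ) (hξ' : T.IsLimit h⁻¹ ξ') (h1 : h ≠ 1)
    (e : E) : ∀ᶠ n : ℕ in atTop, (h ^ n • e ∈ Function.support ξ ↔ e ∈ line ξ ξ') := by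
  filter_upwards [hξ'.eventually_inv_smul_eq_zero (inv_ne_one.mpr h1) e] with n hn
  rw [inv_pow, inv_inv] at hn
  rw [← hξ.pow_smul_mem_line_iff hξ' n e, line, Set.mem_ofPred_eq, hn, Function.mem_support]

theorem finite_support_diff_line (hξ : T.IsLimit h ξ) (hξ' : T.IsLimit h⁻¹ ξ') (h1 : h ≠ 1) :
    (Function.support ξ \ line ξ ξ').Finite := by
  have hfin : (⋃ f ∈ (T.path (h • T.base)).support, (fun n : ℕ => h ^ n • f) ''
      {n | h ^ n • f ∈ Function.support ξ \ line ξ ξ'}).Finite := by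
    refine Set.Finite.biUnion (Finset.finite_toSet _) fun f _ => Set.Finite.image _ ?_
    rw [← Set.not_infinite, ← Nat.frequently_atTop_iff_infinite, not_frequently]
    filter_upwards [hξ.eventually_mem_support_iff hξ' h1 f] with n hn hmem
    exact hmem.2 ((hξ.pow_smul_mem_line_iff hξ' n f).mpr (hn.mp hmem.1))
  refine hfin.subset fun e he => ?_
  obtain ⟨n, f, hf, rfl⟩ := hξ.exists_pow_smul_eq he.1
  exact Set.mem_biUnion hf ⟨n, he, rfl⟩

theorem exists_mem_line [IsCancelSMul G V] (hξ : T.IsLimit h ξ) (hξ' : T.IsLimit h⁻¹ ξ')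
    (h1 : h ≠ 1) : ∃ f ∈ (T.path (h • T.base)).support, f ∈ line ξ ξ' := by
  obtain ⟨e, he, hdiff⟩ :=
    ((hξ.infinite_support h1).sdiff (hξ.finite_support_diff_line hξ' h1)).nonempty
  have hline : e ∈ line ξ ξ' := by_contra fun hc => hdiff ⟨he, hc⟩
  obtain ⟨n, f, hf, rfl⟩ := hξ.exists_pow_smul_eq he
  exact ⟨f, hf, (hξ.pow_smul_mem_line_iff hξ' n f).mp hline⟩

theorem isTame_of_smul_lt (hξ : T.IsLimit h ξ) (hξ' : T.IsLimit h⁻¹ ξ') (h1 : h ≠ 1) {m : E}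
    (hm : m ∈ line ξ ξ') (hmax : ∀ f ∈ (T.path (h • T.base)).support, f ∈ line ξ ξ' → f ≤ m)
    (hlt : h • m < m) : IsTame (Function.support ξ) := by
  have hanti := strictAnti_pow_smul hlt
  obtain ⟨N, hN⟩ := eventually_atTop.mp (hξ.eventually_mem_support_iff hξ' h1 m)
  have hinf : ((fun n : ℕ => h ^ n • m) '' Set.Ici N).Infinite :=
    (Set.infinite_image_iff hanti.injective.injOn).mpr (Set.Ici_infinite N)
  refine hinf.mono ?_
  rintro _ ⟨n, hn, rfl⟩
  refine ⟨(hN n hn).mpr hm, ?_⟩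
  have hfin : (⋃ f ∈ (T.path (h • T.base)).support,
      (fun k : ℕ => h ^ k • f) '' Set.Iio n).Finite :=
    Set.Finite.biUnion (Finset.finite_toSet _) fun f _ => (Set.finite_Iio n).image _
  refine ((hξ.finite_support_diff_line hξ' h1).union hfin).subset ?_
  rintro e ⟨he, hgt⟩
  refine or_iff_not_imp_left.mpr fun hdiff => ?_
  have hline : e ∈ line ξ ξ' := by_contra fun hc => hdiff ⟨he, hc⟩
  obtain ⟨k, f, hf, rfl⟩ := hξ.exists_pow_smul_eq he
  refine Set.mem_biUnion hf ⟨k, Set.mem_Iio.mpr (lt_of_not_ge fun hk => ?_), rfl⟩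
  have hfm : f ≤ m := hmax f hf ((hξ.pow_smul_mem_line_iff hξ' k f).mp hline)
  exact absurd hgt (not_lt.mpr ((smul_mono_right _ hfm).trans (hanti.antitone hk)))

theorem isTame_or_isTame [IsCancelSMul G V] (hξ : T.IsLimit h ξ) (hξ' : T.IsLimit h⁻¹ ξ')
    (h1 : h ≠ 1) : IsTame (Function.support ξ) ∨ IsTame (Function.support ξ') := by
  classical
  obtain ⟨f₀, hf₀, hline₀⟩ := hξ.exists_mem_line hξ' h1
  obtain ⟨m, hm, hmax⟩ := ((T.path (h • T.base)).support.filter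
    (· ∈ line ξ ξ')).exists_max_image id ⟨f₀, Finset.mem_filter.mpr ⟨hf₀, hline₀⟩⟩
  simp only [Finset.mem_filter, id, and_imp] at hm hmax
  rcases lt_trichotomy (h • m) m with hlt | heq | hgt
  · exact Or.inl (hξ.isTame_of_smul_lt hξ' h1 hm.2 hmax hlt)
  · exact absurd (IsCancelSMul.eq_one_of_smul heq) h1
  · have hline (f : E) : f ∈ line ξ' ξ ↔ h • f ∈ line ξ ξ' := by
      rw [line_comm, hξ.smul_mem_line_iff hξ']
    refine Or.inr (hξ'.isTame_of_smul_lt (by rwa [inv_inv]) (inv_ne_one.mpr h1)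
      (m := h⁻¹ • m) ?_ (fun f hf hfline => ?_) ?_)
    · rw [hline, smul_inv_smul]
      exact hm.2
    · rw [Finsupp.mem_support_iff, T.path_inv_smul_base, ← Finsupp.mem_support_iff] at hf
      simpa only [inv_smul_smul] using smul_mono_right h⁻¹ (hmax _ hf ((hline f).mp hfline))
    · simpa only [inv_smul_smul] using
        strictMono_smul_of_covariant h⁻¹ (strictMono_smul_of_covariant h⁻¹ hgt)

end IsLimit

theorem IsTameEnd.translate {ξ : E → ZMod 2} (hξ : T.IsTameEnd ξ) (g : G) :
    T.IsTameEnd (T.translate g ξ) := by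
  obtain ⟨h, h1, hlim, htame⟩ := hξ
  exact ⟨g * h * g⁻¹, by simpa using h1, hlim.conj h1 g, T.isTame_support_translate g htame⟩

theorem IsTameEnd.translate_restrict {H K : Subgroup G} {g : G}
    (hK : ∀ h ∈ H, g * h * g⁻¹ ∈ K) {ξ : E → ZMod 2} (hξ : (T.restrict H).IsTameEnd ξ) :
    (T.restrict K).IsTameEnd (T.translate g ξ) := by
  obtain ⟨⟨h, hh⟩, h1, hlim, htame⟩ := hξ
  replace h1 : h ≠ 1 := fun h0 => h1 (Subtype.ext h0)
  exact ⟨⟨g * h * g⁻¹, hK h hh⟩, by simpa [← Subtype.coe_inj] using h1,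
    IsLimit.conj (T := T) hlim h1 g, T.isTame_support_translate g htame⟩

theorem smul_mem_bridges (g : G) {e : E} (he : e ∈ T.bridges) : g • e ∈ T.bridges := by
  obtain ⟨ξ, η, hξ, hη, hgreatest⟩ := he
  exact ⟨_, _, hξ.translate g, hη.translate g, T.isGreatest_line_translate g hgreatest⟩

theorem smul_mem_bridges_iff {g : G} {e : E} : g • e ∈ T.bridges ↔ e ∈ T.bridges :=
  ⟨fun h => by simpa only [inv_smul_smul] using smul_mem_bridges g⁻¹ h, smul_mem_bridges g⟩

theorem smul_mem_bridges_restrict {H K : Subgroup G} {g : G} (hK : ∀ h ∈ H, g * h * g⁻¹ ∈ K)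
    {e : E} (he : e ∈ (T.restrict H).bridges) : g • e ∈ (T.restrict K).bridges := by
  obtain ⟨ξ, η, hξ, hη, hgreatest⟩ := he
  exact ⟨_, _, hξ.translate_restrict hK, hη.translate_restrict hK,
    T.isGreatest_line_translate g hgreatest⟩

end GTree

/-! ### Generators from bridges -/

section OrbitQuotient

/-- The class of `x` in the quotient by the action of `G`. -/
def orbitMk (G : Type*) {X : Type*} [Group G] [MulAction G X] (x : X) :
    MulAction.orbitRel.Quotient G X :=
  Quotient.mk'' x

variable {G X : Type*} [Group G] [MulAction G X]

theorem orbitMk_eq_orbitMk_iff {x y : X} : orbitMk G x = orbitMk G y ↔ ∃ g : G, g • y = x :=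
  Quotient.eq''

theorem orbitMk_smul (g : G) (x : X) : orbitMk G (g • x) = orbitMk G x :=
  orbitMk_eq_orbitMk_iff.mpr ⟨g, rfl⟩

end OrbitQuotient

/-- The set of edges with both endpoints in `Z`. -/
def innerEdges {X E : Type*} (src tgt : E → X) (Z : Set X) : Set E := {e | src e ∈ Z ∧ tgt e ∈ Z}

theorem innerEdges_mono {X E : Type*} (src tgt : E → X) : Monotone (innerEdges src tgt) :=
  fun _ _ h _ he => ⟨h he.1, h he.2⟩

section Generation

variable {H X E : Type*} [Group H] [MulAction H X]

/-- The set `Z` is a block for the action of `H` with stabilizer `K`: each translate of `Z` is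
either `Z`, when the translating element is in `K`, or disjoint from `Z`. -/
def IsBlockFor (K : Subgroup H) (Z : Set X) : Prop :=
  ∀ z ∈ Z, ∀ h : H, h • z ∈ Z ↔ h ∈ K

theorem isBlockFor_setOf_exists_smul_mem {K : Subgroup H} {Z : Set X}
    (hZ : ∀ z ∈ Z, ∀ h : H, h • z ∈ Z → h ∈ K) :
    IsBlockFor K {x : X | ∃ k ∈ K, k • x ∈ Z} := by
  rintro x ⟨k, hk, hkx⟩ h
  refine ⟨?_, fun hh => ⟨k * h⁻¹, K.mul_mem hk (K.inv_mem hh), ?_⟩⟩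
  · rintro ⟨l, hl, hlx⟩
    have hmem : l * h * k⁻¹ ∈ K := hZ _ hkx _ (by simpa only [mul_smul, inv_smul_smul] using hlx)
    simpa [K.mul_mem_cancel_right (K.inv_mem hk), K.mul_mem_cancel_left hl] using hmem
  · rwa [mul_smul, inv_smul_smul]

theorem isBlockFor_stabilizer (z : X) : IsBlockFor (MulAction.stabilizer H z) {z} := by
  rintro _ rfl h
  exact Iff.rfl

namespace IsBlockFor

theorem exists_extension {S : Finset H} {Z : Set X}
    (hZ : IsBlockFor (Subgroup.closure (S : Set H)) Z) (z : X)
    [IsCyclic (MulAction.stabilizer H z)] :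
    ∃ (S' : Finset H) (Z' : Set X), IsBlockFor (Subgroup.closure (S' : Set H)) Z' ∧
      Z ⊆ Z' ∧ z ∈ Z' ∧ S'.card ≤ S.card + 1 := by
  classical
  have hle (h : H) : Subgroup.closure (S : Set H) ≤ Subgroup.closure (insert h S : Finset H) :=
    Subgroup.closure_mono (Finset.coe_subset.mpr (Finset.subset_insert h S))
  have hmem (h : H) : h ∈ Subgroup.closure ((insert h S : Finset H) : Set H) :=
    Subgroup.subset_closure (Finset.mem_insert_self h S)
  by_cases hex : ∃ h : H, h • z ∈ Z
  · obtain ⟨h, hh⟩ := hex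
    exact ⟨insert h S, _, isBlockFor_setOf_exists_smul_mem
      fun v hv t ht => hle h ((hZ v hv t).mp ht),
      fun v hv => ⟨1, one_mem _, by rwa [one_smul]⟩, ⟨h, hmem h, hh⟩, Finset.card_insert_le h S⟩
  · push Not at hex
    obtain ⟨c, hc⟩ := (Subgroup.isCyclic_iff_exists_zpowers_eq_top _).mp
      (inferInstance : IsCyclic (MulAction.stabilizer H z))
    refine ⟨insert c S, _, isBlockFor_setOf_exists_smul_mem (Z := insert z Z) ?_,
      fun v hv => ⟨1, one_mem _, by rw [one_smul]; exact Or.inr hv⟩,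
      ⟨1, one_mem _, by rw [one_smul]; exact Or.inl rfl⟩, Finset.card_insert_le c S⟩
    rintro v (rfl | hv) t (ht | ht)
    · exact (Subgroup.zpowers_le.mpr (hmem c)) (hc ▸ MulAction.mem_stabilizer_iff.mpr ht)
    · exact absurd ht (hex t)
    · exact absurd (by rwa [← ht, inv_smul_smul]) (hex t⁻¹)
    · exact hle c ((hZ v hv t).mp ht)

variable {src tgt : E → X}

theorem exists_extension_innerEdges (hcyc : ∀ x : X, IsCyclic (MulAction.stabilizer H x))
    {S : Finset H} {Z : Set X} (hZ : IsBlockFor (Subgroup.closure (S : Set H)) Z) {e : E}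
    (he : ¬(src e ∈ Z ↔ tgt e ∈ Z)) :
    ∃ (S' : Finset H) (Z' : Set X), IsBlockFor (Subgroup.closure (S' : Set H)) Z' ∧
      Z ⊆ Z' ∧ e ∈ innerEdges src tgt Z' ∧ S'.card ≤ S.card + 1 := by
  by_cases hs : src e ∈ Z
  · obtain ⟨S', Z', hblock, hsub, ht, hcard⟩ := hZ.exists_extension (tgt e)
    exact ⟨S', Z', hblock, hsub, ⟨hsub hs, ht⟩, hcard⟩
  · have ht : tgt e ∈ Z := by tauto
    obtain ⟨S', Z', hblock, hsub, hs', hcard⟩ := hZ.exists_extension (src e)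
    exact ⟨S', Z', hblock, hsub, ⟨hs', hsub ht⟩, hcard⟩

theorem orbitMk_notMem_image_innerEdges [MulAction H E]
    (hsrc : ∀ (h : H) e, src (h • e) = h • src e) (htgt : ∀ (h : H) e, tgt (h • e) = h • tgt e)
    {K : Subgroup H} {Z : Set X} (hZ : IsBlockFor K Z) {e : E} (he : ¬(src e ∈ Z ↔ tgt e ∈ Z)) :
    orbitMk H e ∉ orbitMk H '' innerEdges src tgt Z := by
  rintro ⟨f, ⟨hs, ht⟩, hf⟩
  obtain ⟨h, rfl⟩ := orbitMk_eq_orbitMk_iff.mp hf.symm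
  rw [hsrc, htgt, hZ _ hs, hZ _ ht] at he
  exact he Iff.rfl

end IsBlockFor

theorem exists_closure_eq_top_and_card_le [MulAction H E] {src tgt : E → X}
    (hsrc : ∀ (h : H) e, src (h • e) = h • src e) (htgt : ∀ (h : H) e, tgt (h • e) = h • tgt e)
    {base : X}
    (hconn : ∀ Z : Set X, base ∈ Z → (∀ e, src e ∈ Z ↔ tgt e ∈ Z) → ∀ x, x ∈ Z)
    (hcyc : ∀ x : X, IsCyclic (MulAction.stabilizer H x))
    {Br : Set E} (hBr : ∀ e ∉ Br, src e = tgt e) (hfin : (orbitMk H '' Br).Finite) :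
    ∃ S : Finset H, Subgroup.closure (S : Set H) = ⊤ ∧ S.card ≤ (orbitMk H '' Br).ncard + 1 := by
  let inner : Set X → Set (MulAction.orbitRel.Quotient H E) :=
    fun Z => orbitMk H '' (Br ∩ innerEdges src tgt Z)
  have hinner (Z : Set X) : inner Z ⊆ orbitMk H '' Br := Set.image_mono Set.inter_subset_left
  let good : Set (Set X) := {Z | base ∈ Z ∧ ∃ S : Finset H,
    IsBlockFor (Subgroup.closure (S : Set H)) Z ∧ S.card ≤ (inner Z).ncard + 1}
  have hne : good.Nonempty := by
    obtain ⟨c, hc⟩ := (Subgroup.isCyclic_iff_exists_zpowers_eq_top _).mp (hcyc base)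
    refine ⟨{base}, rfl, {c}, ?_, by simp⟩
    rw [Finset.coe_singleton, ← Subgroup.zpowers_eq_closure, hc]
    exact isBlockFor_stabilizer base
  obtain ⟨Z, ⟨hbase, S, hblock, hcard⟩, hmax⟩ := Set.Finite.exists_maximalFor' inner good
    (hfin.finite_subsets.subset (Set.image_subset_iff.mpr fun Z _ => hinner Z)) hne
  have hclosed (e : E) : src e ∈ Z ↔ tgt e ∈ Z := by
    -- Otherwise a block containing `Z` and both endpoints of `e` contradicts maximality.
    by_contra he
    have heBr : e ∈ Br := by_contra fun hc => he (hBr e hc ▸ Iff.rfl)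
    obtain ⟨S', Z', hblock', hZZ', hends, hcard'⟩ := hblock.exists_extension_innerEdges hcyc he
    have hlt : inner Z ⊂ inner Z' := ⟨
      Set.image_mono (Set.inter_subset_inter_right Br (innerEdges_mono src tgt hZZ')),
      fun hle => hblock.orbitMk_notMem_image_innerEdges hsrc htgt he
        (Set.image_mono Set.inter_subset_right (hle ⟨e, ⟨heBr, hends⟩, rfl⟩))⟩
    have hncard := Set.ncard_lt_ncard hlt (hfin.subset (hinner Z'))
    exact hlt.2 (hmax ⟨hZZ' hbase, S', hblock', by lia⟩ hlt.1)
  refine ⟨S, eq_top_iff.mpr fun h _ => (hblock base hbase h).mp (hconn Z hbase hclosed _), ?_⟩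
  exact hcard.trans (Nat.add_le_add_right (Set.ncard_le_ncard (hinner Z) hfin) 1)

end Generation

theorem isCyclic_of_exists_zpow_eq_zpow {K : Type*} [Group K] [IsFreeGroup K]
    (hK : ∀ h k : K, h ≠ 1 → k ≠ 1 → ∃ a b : ℤ, a ≠ 0 ∧ h ^ a = k ^ b) : IsCyclic K := by
  classical
  have hof (x : IsFreeGroup.Generators K) : (IsFreeGroup.of x : K) ≠ 1 := by
    intro hx
    simpa using congrArg (IsFreeGroup.lift fun _ => Multiplicative.ofAdd (1 : ℤ)) hx
  have hsub : Subsingleton (IsFreeGroup.Generators K) := by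
    refine ⟨fun x y => by_contra fun hxy => ?_⟩
    obtain ⟨a, b, ha, hab⟩ := hK _ _ (hof x) (hof y)
    have hlift := congrArg (IsFreeGroup.lift
      fun z => Multiplicative.ofAdd (if z = x then (1 : ℤ) else 0)) hab
    simp only [map_zpow, IsFreeGroup.lift_of, if_neg (Ne.symm hxy), if_true, ← ofAdd_zsmul,
      smul_eq_mul, mul_one, mul_zero] at hlift
    exact ha (Multiplicative.ofAdd.injective hlift)
  rcases isEmpty_or_nonempty (IsFreeGroup.Generators K) with hempty | hnonempty
  · exact (IsFreeGroup.mulEquiv K).isCyclic.mp inferInstance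
  · have := uniqueOfSubsingleton hnonempty.some
    exact (IsFreeGroup.mulEquiv K).isCyclic.mp inferInstance

namespace GTree

variable {G V E : Type*} [Group G] [MulAction G V] [MulAction G E] [LinearOrder E]
  [CovariantClass G E HSMul.hSMul LE.le] [IsCancelSMul G E] {T : GTree G V E}

/-- Two vertices are equivalent if no bridge separates them. -/
def bridgeCon (T : GTree G V E) : SMulCon G V where
  r v w := Set.EqOn (T.path v) (T.path w) T.bridges
  iseqv := ⟨fun v => Set.eqOn_refl _ _, Set.EqOn.symm, Set.EqOn.trans⟩
  smul g v w h e he := by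
    rw [T.path_smul_apply g v, T.path_smul_apply g w, h (smul_mem_bridges g⁻¹ he)]

/-- The class of `v` in the tree obtained by contracting the edges that are not bridges. -/
def bridgeClass (T : GTree G V E) (v : V) : T.bridgeCon.Quotient :=
  Quotient.mk'' v

theorem bridgeClass_src_eq_bridgeClass_tgt {e : E} (he : e ∉ T.bridges) :
    T.bridgeClass (T.src e) = T.bridgeClass (T.tgt e) := by
  refine Quotient.eq''.mpr fun f (hf : f ∈ T.bridges) => ?_
  rw [T.path_tgt, Finsupp.add_apply, Finsupp.single_eq_of_ne (ne_of_mem_of_not_mem hf he),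
    add_zero]

theorem mem_stabilizer_bridgeClass_iff {g : G} {v : V} :
    g ∈ MulAction.stabilizer G (T.bridgeClass v) ↔
      Set.EqOn (T.path (g • v)) (T.path v) T.bridges :=
  MulAction.mem_stabilizer_iff.trans Quotient.eq''

theorem IsLimit.eqOn_bridges {h : G} (h1 : h ≠ 1) {ξ : E → ZMod 2} (hξ : T.IsLimit h ξ) {v : V}
    (hv : h ∈ MulAction.stabilizer G (T.bridgeClass v)) :
    Set.EqOn ξ (T.path v) T.bridges := by
  intro e he
  obtain ⟨n, hn⟩ := (hξ.eventually_path_smul h1 v e).exists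
  rw [← hn]
  exact mem_stabilizer_bridgeClass_iff.mp (pow_mem hv n) he

variable [IsCancelSMul G V]

theorem exists_isTameEnd_eqOn_bridges {h : G} (h1 : h ≠ 1) {v : V}
    (hv : h ∈ MulAction.stabilizer G (T.bridgeClass v)) :
    ∃ g ξ, (g = h ∨ g = h⁻¹) ∧ T.IsLimit g ξ ∧ T.IsTameEnd ξ ∧
      Set.EqOn ξ (T.path v) T.bridges := by
  have h1' := inv_ne_one.mpr h1
  obtain ⟨ξ, hξ⟩ := T.exists_isLimit h1
  obtain ⟨ξ', hξ'⟩ := T.exists_isLimit h1'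
  rcases hξ.isTame_or_isTame hξ' h1 with htame | htame
  · exact ⟨h, ξ, Or.inl rfl, hξ, ⟨h, h1, hξ, htame⟩, hξ.eqOn_bridges h1 hv⟩
  · exact ⟨h⁻¹, ξ', Or.inr rfl, hξ', ⟨h⁻¹, h1', hξ', htame⟩,
      hξ'.eqOn_bridges h1' (inv_mem hv)⟩

theorem exists_zpow_eq_zpow_of_mem_stabilizer {h k : G} (h1 : h ≠ 1) (k1 : k ≠ 1) {v : V}
    (hv : h ∈ MulAction.stabilizer G (T.bridgeClass v))
    (kv : k ∈ MulAction.stabilizer G (T.bridgeClass v)) :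
    ∃ a b : ℤ, a ≠ 0 ∧ h ^ a = k ^ b := by
  obtain ⟨g, ξ, hg, lξ, eξ, bξ⟩ := exists_isTameEnd_eqOn_bridges h1 hv
  obtain ⟨l, η, hl, lη, eη, bη⟩ := exists_isTameEnd_eqOn_bridges k1 kv
  obtain rfl : ξ = η := eξ.eq_of_eqOn_bridges eη (bξ.trans bη.symm)
  have hinf : (Function.support ξ ∩ Function.support ξ).Infinite := by
    obtain ⟨a, a1, la, -⟩ := eξ
    rw [Set.inter_self]
    exact la.infinite_support a1
  obtain ⟨a, b, ha, -, hab⟩ := lξ.exists_pow_eq_pow lη hinf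
  have ha' : (a : ℤ) ≠ 0 := Int.natCast_ne_zero.mpr ha.ne'
  rcases hg with rfl | rfl <;> rcases hl with rfl | rfl
  · exact ⟨a, b, ha', by simpa using hab⟩
  · exact ⟨a, -b, ha', by simpa using hab⟩
  · exact ⟨-a, b, neg_ne_zero.mpr ha', by simpa using hab⟩
  · exact ⟨-a, -b, neg_ne_zero.mpr ha', by simpa using hab⟩

theorem isCyclic_stabilizer_bridgeCon [IsFreeGroup G] (x : T.bridgeCon.Quotient) :
    IsCyclic (MulAction.stabilizer G x) := by
  obtain ⟨v, rfl⟩ := Quotient.mk''_surjective x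
  refine isCyclic_of_exists_zpow_eq_zpow fun h k h1 k1 => ?_
  obtain ⟨a, b, ha, hab⟩ := exists_zpow_eq_zpow_of_mem_stabilizer
    (OneMemClass.coe_eq_one.not.mpr h1) (OneMemClass.coe_eq_one.not.mpr k1) h.2 k.2
  exact ⟨a, b, ha, Subtype.ext hab⟩

/-- The set of orbits of bridges. Its cardinality will turn out to be the reduced rank of `G`. -/
def bridgeOrbits (T : GTree G V E) : Set (MulAction.orbitRel.Quotient G E) :=
  orbitMk G '' T.bridges

theorem exists_closure_eq_top_and_card_le_ncard_bridgeOrbits [IsFreeGroup G]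
    (hfin : T.bridgeOrbits.Finite) :
    ∃ S : Finset G, Subgroup.closure (S : Set G) = ⊤ ∧ S.card ≤ T.bridgeOrbits.ncard + 1 := by
  refine exists_closure_eq_top_and_card_le (X := T.bridgeCon.Quotient)
    (src := fun e => T.bridgeClass (T.src e)) (tgt := fun e => T.bridgeClass (T.tgt e))
    (base := T.bridgeClass T.base) (fun h e => congrArg T.bridgeClass (T.src_smul h e))
    (fun h e => congrArg T.bridgeClass (T.tgt_smul h e)) (fun Z hbase hZ x => ?_)
    isCyclic_stabilizer_bridgeCon (fun e => bridgeClass_src_eq_bridgeClass_tgt) hfin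
  obtain ⟨v, rfl⟩ := Quotient.mk''_surjective x
  exact T.connected (T.bridgeClass ⁻¹' Z) hbase hZ v

end GTree

/-! ### Bounding the number of bridges -/

section CycleRank

variable {V E : Type*}

theorem card_add_one_le_finrank_ker_boundary_add_card [Fintype E] [Fintype V] [Nonempty V]
    (src tgt : E → V) :
    Fintype.card E + 1 ≤
      Module.finrank (ZMod 2) (LinearMap.ker (boundary src tgt)) + Fintype.card V := by
  let aug : (V →₀ ZMod 2) →ₗ[ZMod 2] ZMod 2 := Finsupp.linearCombination (ZMod 2) fun _ => 1
  have hrange : LinearMap.range (boundary src tgt) ≤ LinearMap.ker aug := by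
    rintro _ ⟨c, rfl⟩
    rw [LinearMap.mem_ker, linearCombination_boundary]
    simp [CharTwo.add_self_eq_zero, Finsupp.linearCombination_apply]
  have haug : LinearMap.ker aug < ⊤ := by
    refine lt_top_iff_ne_top.mpr fun htop => ?_
    have hmem : Finsupp.single (Classical.arbitrary V) 1 ∈ LinearMap.ker aug := htop ▸ trivial
    simp [aug] at hmem
  have hlt := Submodule.finrank_lt_finrank_of_lt (hrange.trans_lt haug)
  have hsum := LinearMap.finrank_range_add_finrank_ker (boundary src tgt)
  rw [finrank_top, Module.finrank_finsupp_self] at hlt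
  rw [Module.finrank_finsupp_self] at hsum
  lia

theorem card_add_one_le_of_ker_boundary_le {src tgt : E → V}
    {M : Submodule (ZMod 2) (E →₀ ZMod 2)} [Module.Finite (ZMod 2) M]
    (hM : LinearMap.ker (boundary src tgt) ≤ M) (Φ : Finset E) {W : Finset V} (hW : W.Nonempty)
    (hΦ : ∀ e ∈ Φ, src e ∈ W ∧ tgt e ∈ W) :
    Φ.card + 1 ≤ Module.finrank (ZMod 2) M + W.card := by
  have := hW.to_subtype
  let src' : Φ → W := fun e => ⟨src e, (hΦ e e.2).1⟩
  let tgt' : Φ → W := fun e => ⟨tgt e, (hΦ e e.2).2⟩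
  have hmem (c : LinearMap.ker (boundary src' tgt')) :
      (c : Φ →₀ ZMod 2).mapDomain Subtype.val ∈ M := by
    refine hM (LinearMap.mem_ker.mpr ?_)
    rw [boundary_mapDomain (src := src') (tgt := tgt') (src' := src) (tgt' := tgt)
      (p := Subtype.val) (q := Subtype.val) (fun _ => rfl) (fun _ => rfl),
      LinearMap.mem_ker.mp c.2, Finsupp.mapDomain_zero]
  have hker : Module.finrank (ZMod 2) (LinearMap.ker (boundary src' tgt')) ≤
      Module.finrank (ZMod 2) M := by
    refine LinearMap.finrank_le_finrank_of_injective (f := ((Finsupp.lmapDomain (ZMod 2) (ZMod 2)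
      Subtype.val).comp (Submodule.subtype _)).codRestrict M hmem) fun c d hcd => ?_
    exact Subtype.ext (Finsupp.mapDomain_injective Subtype.val_injective
      (congrArg Subtype.val hcd))
  have hcard := card_add_one_le_finrank_ker_boundary_add_card src' tgt'
  rw [Fintype.card_coe, Fintype.card_coe] at hcard
  lia

end CycleRank

namespace GTree

variable {G V E : Type*} [Group G] [MulAction G V] [MulAction G E] (T : GTree G V E)

section Quotient

/-- The image of `path v` in the chains of the quotient graph. -/
noncomputable def quotientPath (v : V) : MulAction.orbitRel.Quotient G E →₀ ZMod 2 :=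
  (T.path v).mapDomain (orbitMk G)

theorem quotientPath_base : T.quotientPath T.base = 0 := by
  rw [quotientPath, T.path_base, Finsupp.mapDomain_zero]

theorem quotientPath_smul (g : G) (v : V) :
    T.quotientPath (g • v) = T.quotientPath (g • T.base) + T.quotientPath v := by
  simp only [quotientPath, T.path_smul g v, Finsupp.mapDomain_add, ← Finsupp.mapDomain_comp,
    Function.comp_def, orbitMk_smul]

theorem quotientPath_src_add_quotientPath_tgt (e : E) :
    T.quotientPath (T.src e) + T.quotientPath (T.tgt e) = Finsupp.single (orbitMk G e) 1 := by
  rw [quotientPath, quotientPath, T.path_tgt, Finsupp.mapDomain_add, Finsupp.mapDomain_single,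
    ← add_assoc, ZModModule.add_self, zero_add]

/-- The span of the closed paths in the quotient graph corresponding to the elements of `S`. -/
noncomputable def cycleSpan (S : Finset G) :
    Submodule (ZMod 2) (MulAction.orbitRel.Quotient G E →₀ ZMod 2) :=
  Submodule.span (ZMod 2) ((fun g => T.quotientPath (g • T.base)) '' (S : Set G))

instance (S : Finset G) : Module.Finite (ZMod 2) (T.cycleSpan S) :=
  FiniteDimensional.span_of_finite _ (S.finite_toSet.image _)

theorem finrank_cycleSpan_le (S : Finset G) :
    Module.finrank (ZMod 2) (T.cycleSpan S) ≤ S.card := by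
  classical
  rw [cycleSpan, ← Finset.coe_image]
  exact (finrank_span_finset_le_card _).trans Finset.card_image_le

theorem quotientPath_smul_base_mem_cycleSpan {S : Finset G}
    (hS : Subgroup.closure (S : Set G) = ⊤) (g : G) :
    T.quotientPath (g • T.base) ∈ T.cycleSpan S := by
  have hg : g ∈ Subgroup.closure (S : Set G) := hS ▸ Subgroup.mem_top g
  induction hg using Subgroup.closure_induction with
  | mem x hx => exact Submodule.subset_span ⟨x, hx, rfl⟩
  | one => rw [one_smul, quotientPath_base]; exact zero_mem _
  | mul x y _ _ hx hy => rw [mul_smul, T.quotientPath_smul]; exact add_mem hx hy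
  | inv x _ hx =>
    have h := T.quotientPath_smul x (x⁻¹ • T.base)
    rw [smul_inv_smul, quotientPath_base] at h
    rw [eq_neg_of_add_eq_zero_right h.symm]
    exact neg_mem hx

/-- The source map of the quotient graph. -/
def quotientSrc : MulAction.orbitRel.Quotient G E → MulAction.orbitRel.Quotient G V :=
  Quotient.map' T.src (by
    rintro _ e ⟨g, rfl⟩
    exact ⟨g, (T.src_smul g e).symm⟩)

/-- The target map of the quotient graph. -/
def quotientTgt : MulAction.orbitRel.Quotient G E → MulAction.orbitRel.Quotient G V :=
  Quotient.map' T.tgt (by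
    rintro _ e ⟨g, rfl⟩
    exact ⟨g, (T.tgt_smul g e).symm⟩)

theorem ker_boundary_le_cycleSpan {S : Finset G} (hS : Subgroup.closure (S : Set G) = ⊤) :
    LinearMap.ker (boundary T.quotientSrc T.quotientTgt) ≤ T.cycleSpan S := by
  let φ : MulAction.orbitRel.Quotient G V →
      (MulAction.orbitRel.Quotient G E →₀ ZMod 2) ⧸ T.cycleSpan S :=
    fun v => Quotient.liftOn' v (fun v => (T.cycleSpan S).mkQ (T.quotientPath v)) (by
      rintro _ v ⟨g, rfl⟩
      change (T.cycleSpan S).mkQ (T.quotientPath (g • v)) = _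
      rw [T.quotientPath_smul, map_add, add_eq_right]
      exact (Submodule.Quotient.mk_eq_zero _).mpr (T.quotientPath_smul_base_mem_cycleSpan hS g))
  -- Modulo `T.cycleSpan S`, a chain of the quotient graph is a function of its boundary.
  have hcomp : (Finsupp.linearCombination (ZMod 2) φ).comp
      (boundary T.quotientSrc T.quotientTgt) = (T.cycleSpan S).mkQ := by
    refine Finsupp.lhom_ext fun e c => ?_
    obtain ⟨e, rfl⟩ := Quotient.mk''_surjective e
    rw [LinearMap.comp_apply, boundary_single, map_add, Finsupp.linearCombination_single,
      Finsupp.linearCombination_single, ← smul_add]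
    change c • ((T.cycleSpan S).mkQ (T.quotientPath (T.src e)) +
      (T.cycleSpan S).mkQ (T.quotientPath (T.tgt e))) = _
    rw [← map_add, quotientPath_src_add_quotientPath_tgt, ← map_smul, Finsupp.smul_single_one]
    rfl
  intro c hc
  rw [← Submodule.ker_mkQ (T.cycleSpan S), ← hcomp, LinearMap.mem_ker, LinearMap.comp_apply,
    LinearMap.mem_ker.mp hc, map_zero]

end Quotient

section Core

/-- The set `Z` contains the vertices of the path from `base` to each of its elements. -/
def IsPathClosed (Z : Set V) : Prop :=
  ∀ v ∈ Z, Function.support (T.path v) ⊆ innerEdges T.src T.tgt Z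

variable {T}

theorem IsPathClosed.insert {Z : Set V} (hZ : T.IsPathClosed Z) {v w : V} {e : E} (hv : v ∈ Z)
    (hpath : T.path w = T.path v + Finsupp.single e 1)
    (he : e ∈ innerEdges T.src T.tgt (insert w Z)) : T.IsPathClosed (insert w Z) := by
  have hmono := innerEdges_mono T.src T.tgt (Set.subset_insert w Z)
  rintro u (rfl | hu) f hf
  · rcases eq_or_ne f e with rfl | hfe
    · exact he
    · rw [Function.mem_support, hpath, Finsupp.add_apply, Finsupp.single_eq_of_ne hfe,
        add_zero] at hf
      exact hmono (hZ v hv hf)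
  · exact hmono (hZ u hu hf)

variable (T)

theorem exists_finite_isPathClosed (v : V) : ∃ F : Set V, F.Finite ∧ v ∈ F ∧ T.IsPathClosed F := by
  refine T.connected {v | ∃ F : Set V, F.Finite ∧ v ∈ F ∧ T.IsPathClosed F} ?_ (fun e => ?_) v
  · refine ⟨{T.base}, Set.finite_singleton _, rfl, ?_⟩
    rintro _ rfl e he
    simp [T.path_base] at he
  · have htgt := T.path_tgt e
    have hsrc : T.path (T.src e) = T.path (T.tgt e) + Finsupp.single e 1 := by
      rw [htgt, add_assoc, ZModModule.add_self, add_zero]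
    constructor
    · rintro ⟨F, hF, hmem, hcl⟩
      exact ⟨_, hF.insert _, Set.mem_insert _ F,
        hcl.insert hmem htgt ⟨Or.inr hmem, Set.mem_insert _ F⟩⟩
    · rintro ⟨F, hF, hmem, hcl⟩
      exact ⟨_, hF.insert _, Set.mem_insert _ F,
        hcl.insert hmem hsrc ⟨Set.mem_insert _ F, Or.inr hmem⟩⟩

theorem exists_finite_isPathClosed_superset {S : Set V} (hS : S.Finite) :
    ∃ F : Set V, F.Finite ∧ S ⊆ F ∧ T.IsPathClosed F := by
  choose F hfin hmem hcl using T.exists_finite_isPathClosed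
  refine ⟨⋃ v ∈ S, F v, hS.biUnion fun v _ => hfin v,
    fun v hv => Set.mem_biUnion hv (hmem v), fun w hw => ?_⟩
  obtain ⟨v, hv, hw⟩ := Set.mem_iUnion₂.mp hw
  exact (hcl v w hw).trans (innerEdges_mono T.src T.tgt (Set.subset_biUnion_of_mem hv))

theorem support_path_smul_subset {Y : Set E} (hY : ∀ (g : G), ∀ e ∈ Y, g • e ∈ Y) {g : G} {v : V}
    (hg : Function.support (T.path (g • T.base)) ⊆ Y) (hv : Function.support (T.path v) ⊆ Y) :
    Function.support (T.path (g • v)) ⊆ Y := by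
  intro e he
  by_cases h0 : T.path (g • T.base) e = 0
  · rw [Function.mem_support, T.path_smul_apply, h0, zero_add] at he
    simpa only [smul_inv_smul] using hY g _ (hv he)
  · exact hg h0

theorem support_path_smul_base_subset {Y : Set E} (hY : ∀ (g : G), ∀ e ∈ Y, g • e ∈ Y)
    {S : Set G} (hS : Subgroup.closure S = ⊤)
    (hSY : ∀ g ∈ S, Function.support (T.path (g • T.base)) ⊆ Y) (g : G) :
    Function.support (T.path (g • T.base)) ⊆ Y := by
  have hg : g ∈ Subgroup.closure S := hS ▸ Subgroup.mem_top g
  induction hg using Subgroup.closure_induction with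
  | mem x hx => exact hSY x hx
  | one => simp [T.path_base]
  | mul x y _ _ hx hy =>
    rw [mul_smul]
    exact T.support_path_smul_subset hY hx hy
  | inv x _ hx =>
    intro e he
    rw [Function.mem_support, T.path_inv_smul_base] at he
    simpa only [inv_smul_smul] using hY x⁻¹ _ (hx he)

/-- `Z` is the set of vertices of a `G`-invariant subtree containing the base vertex, with finitely
many orbits of vertices. -/
structure IsCore (Z : Set V) : Prop where
  base_mem : T.base ∈ Z
  smul_mem : ∀ (g : G), ∀ v ∈ Z, g • v ∈ Z
  isPathClosed : T.IsPathClosed Z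
  finite : (orbitMk G '' Z).Finite

theorem exists_isCore {S : Finset G} (hS : Subgroup.closure (S : Set G) = ⊤) :
    ∃ Z, T.IsCore Z := by
  obtain ⟨F, hF, hSF, hcl⟩ := T.exists_finite_isPathClosed_superset
    ((S.finite_toSet.image (· • T.base)).insert T.base)
  let Z : Set V := {v | ∃ g : G, ∃ f ∈ F, g • f = v}
  have hFZ : F ⊆ Z := fun f hf => ⟨1, f, hf, one_smul G f⟩
  have hZ (g : G) : ∀ v ∈ Z, g • v ∈ Z := by
    rintro _ ⟨h, f, hf, rfl⟩
    exact ⟨g * h, f, hf, mul_smul g h f⟩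
  have hedges (g : G) : ∀ e ∈ innerEdges T.src T.tgt Z, g • e ∈ innerEdges T.src T.tgt Z :=
    fun e he => ⟨T.src_smul g e ▸ hZ g _ he.1, T.tgt_smul g e ▸ hZ g _ he.2⟩
  have hclZ {f : V} (hf : f ∈ F) : Function.support (T.path f) ⊆ innerEdges T.src T.tgt Z :=
    (hcl f hf).trans (innerEdges_mono T.src T.tgt hFZ)
  refine ⟨Z, hFZ (hSF (Set.mem_insert _ _)), hZ, ?_, (hF.image (orbitMk G)).subset ?_⟩
  · rintro _ ⟨g, f, hf, rfl⟩
    refine T.support_path_smul_subset hedges (T.support_path_smul_base_subset hedges hS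
      (fun s hs => hclZ (hSF (Or.inr (Set.mem_image_of_mem _ hs)))) g) (hclZ hf)
  · rintro _ ⟨_, ⟨g, f, hf, rfl⟩, rfl⟩
    exact ⟨f, hf, (orbitMk_smul g f).symm⟩

end Core

end GTree

theorem finite_and_ncard_add_one_le {α : Type*} {S : Set α} {m : ℕ}
    (h : ∀ F : Finset α, (F : Set α) ⊆ S → F.card + 1 ≤ m) : S.Finite ∧ S.ncard + 1 ≤ m := by
  have hfin : S.Finite := by
    by_contra hinf
    obtain ⟨F, hF, rfl⟩ := Set.Infinite.exists_subset_card_eq hinf m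
    exact absurd (h F hF) (Nat.not_succ_le_self _)
  refine ⟨hfin, ?_⟩
  rw [Set.ncard_eq_toFinset_card S hfin]
  exact h _ hfin.coe_toFinset.subset

theorem finite_of_finite_image_orbitMk {G Y Q : Type*} [Group G] [MulAction G Y] {S : Set Y}
    (hS : (orbitMk G '' S).Finite) (f : Y → Q) (hf : (f '' S).Finite)
    (hsmul : ∀ y ∈ S, ∀ g : G, g • y ∈ S → f (g • y) = f y → g = 1) : S.Finite := by
  refine Set.Finite.of_finite_image (f := fun y => (f y, orbitMk G y)) ?_ ?_
  · refine (hf.prod hS).subset ?_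
    rintro _ ⟨y, hy, rfl⟩
    exact ⟨Set.mem_image_of_mem f hy, Set.mem_image_of_mem _ hy⟩
  · intro y hy z hz hyz
    obtain ⟨hfyz, hmk⟩ := Prod.mk.inj hyz
    obtain ⟨g, rfl⟩ := orbitMk_eq_orbitMk_iff.mp hmk
    rw [hsmul z hz g hy hfyz, one_smul]

namespace GTree

variable {G V E : Type*} [Group G] [MulAction G V] [MulAction G E]

theorem finite_innerEdges_inter_cut [IsCancelSMul G V] (T : GTree G V E) {Z : Set V}
    (hfin : (orbitMk G '' innerEdges T.src T.tgt Z).Finite) {C : Set V} (hC : C.Finite) :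
    (innerEdges T.src T.tgt Z ∩ T.cut C).Finite := by
  have hend (f : E → V) (hf : ∀ (g : G) e, f (g • e) = g • f e) :
      {e ∈ innerEdges T.src T.tgt Z | f e ∈ C}.Finite := by
    refine finite_of_finite_image_orbitMk (G := G) (hfin.subset (Set.image_mono fun e he => he.1))
      f (hC.subset (Set.image_subset_iff.mpr fun e he => he.2)) fun e _ g _ hge => ?_
    rw [hf] at hge
    exact IsCancelSMul.eq_one_of_smul hge
  refine ((hend T.src T.src_smul).union (hend T.tgt T.tgt_smul)).subset ?_
  rintro e ⟨he, hcut⟩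
  by_cases hs : T.src e ∈ C
  · exact Or.inl ⟨he, hs⟩
  · exact Or.inr ⟨he, by_contra fun ht => hcut (iff_of_false hs ht)⟩

namespace IsCore

variable {T : GTree G V E} {Z : Set V}

theorem finite_and_ncard_innerEdges_add_one_le (hZ : T.IsCore Z) {S : Finset G}
    (hS : Subgroup.closure (S : Set G) = ⊤) :
    (orbitMk G '' innerEdges T.src T.tgt Z).Finite ∧
      (orbitMk G '' innerEdges T.src T.tgt Z).ncard + 1 ≤
        S.card + (orbitMk G '' Z).ncard := by
  refine finite_and_ncard_add_one_le fun F hF => ?_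
  have hends : ∀ e ∈ F, T.quotientSrc e ∈ hZ.finite.toFinset ∧
      T.quotientTgt e ∈ hZ.finite.toFinset := by
    intro e he
    obtain ⟨e, ⟨hs, ht⟩, rfl⟩ := hF he
    rw [Set.Finite.mem_toFinset, Set.Finite.mem_toFinset]
    exact ⟨Set.mem_image_of_mem _ hs, Set.mem_image_of_mem _ ht⟩
  have hcard := card_add_one_le_of_ker_boundary_le (T.ker_boundary_le_cycleSpan hS) F
    (hZ.finite.toFinset_nonempty.mpr ⟨_, Set.mem_image_of_mem _ hZ.base_mem⟩) hends
  rw [← Set.ncard_eq_toFinset_card _ hZ.finite] at hcard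
  exact hcard.trans (Nat.add_le_add_right (T.finrank_cycleSpan_le S) _)

open Classical in
theorem sum_path_of_cut (hZ : T.IsCore Z) {C : Set V} {D : Finset E}
    (hD : (D : Set E) = innerEdges T.src T.tgt Z ∩ T.cut C) {v : V} (hv : v ∈ Z) :
    ∑ e ∈ D, T.path v e = (if v ∈ C then 1 else 0) + (if T.base ∈ C then 1 else 0) := by
  refine T.sum_path_of_cut (fun e he hcut => ?_) fun e he => (hD.subset he).2
  exact hD.superset ⟨hZ.isPathClosed v hv (Finsupp.mem_support_iff.mp he), hcut⟩

theorem support_subset_of_isTameEnd [LinearOrder E] (hZ : T.IsCore Z) {ξ : E → ZMod 2}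
    (hξ : T.IsTameEnd ξ) : Function.support ξ ⊆ innerEdges T.src T.tgt Z := by
  intro e he
  obtain ⟨h, -, hlim, -⟩ := hξ
  obtain ⟨n, hn⟩ := (hlim e).exists
  exact hZ.isPathClosed _ (hZ.smul_mem _ _ hZ.base_mem) (by rwa [Function.mem_support, hn])

theorem bridges_subset [LinearOrder E] (hZ : T.IsCore Z) :
    T.bridges ⊆ innerEdges T.src T.tgt Z := by
  rintro e ⟨ξ, η, hξ, hη, he, -⟩
  by_cases h0 : ξ e = 0
  · exact hZ.support_subset_of_isTameEnd hη fun h => he (h0.trans h.symm)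
  · exact hZ.support_subset_of_isTameEnd hξ h0

variable [LinearOrder E] [CovariantClass G E HSMul.hSMul LE.le] [IsCancelSMul G E]
  [IsCancelSMul G V]

open Classical in
theorem sum_isTameEnd_of_cut (hZ : T.IsCore Z) {C : Set V} (hC : C.Finite) {D : Finset E}
    (hD : (D : Set E) = innerEdges T.src T.tgt Z ∩ T.cut C) {ξ : E → ZMod 2}
    (hξ : T.IsTameEnd ξ) : ∑ e ∈ D, ξ e = if T.base ∈ C then 1 else 0 := by
  obtain ⟨h, h1, hlim, -⟩ := hξ
  obtain ⟨n, hn, hn'⟩ := ((T.eventually_pow_smul_notMem h1 T.base hC).and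
    ((Filter.eventually_all_finset D).mpr fun e _ => hlim e)).exists
  rw [← Finset.sum_congr rfl hn', hZ.sum_path_of_cut hD (hZ.smul_mem _ _ hZ.base_mem), if_neg hn,
    zero_add]

theorem exists_mem_cut_ne (hZ : T.IsCore Z)
    (hfin : (orbitMk G '' innerEdges T.src T.tgt Z).Finite) {C : Set V} (hC : C.Finite)
    {v : V} (hv : v ∈ Z) (hvC : v ∈ C) {ξ : E → ZMod 2} (hξ : T.IsTameEnd ξ) :
    ∃ e ∈ innerEdges T.src T.tgt Z ∩ T.cut C, ξ e ≠ T.path v e := by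
  have hD := (T.finite_innerEdges_inter_cut hfin hC).coe_toFinset
  by_contra! heq
  have hsum := Finset.sum_congr rfl fun e he => heq e (hD.subset he)
  rw [hZ.sum_isTameEnd_of_cut hC hD hξ, hZ.sum_path_of_cut hD hv, if_pos hvC] at hsum
  exact one_ne_zero (right_eq_add.mp hsum)

theorem notMem_bridges_of_isLeast (hZ : T.IsCore Z)
    (hfin : (orbitMk G '' innerEdges T.src T.tgt Z).Finite) {C : Set V} (hC : C.Finite)
    {e : E} (he : IsLeast (innerEdges T.src T.tgt Z ∩ T.cut C) e) : e ∉ T.bridges := by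
  rintro ⟨ξ, η, hξ, hη, hmem, hmax⟩
  have hD := (T.finite_innerEdges_inter_cut hfin hC).coe_toFinset
  -- A line joining two ends meets `T.cut C` an even number of times, so not only in `e`.
  have hsum := (hZ.sum_isTameEnd_of_cut hC hD hξ).trans (hZ.sum_isTameEnd_of_cut hC hD hη).symm
  rw [← sub_eq_zero, ← Finset.sum_sub_distrib,
    Finset.sum_eq_single_of_mem e (hD.superset he.1) fun f hf hfe => ?_] at hsum
  · exact hmem (sub_eq_zero.mp hsum)
  · exact sub_eq_zero.mpr
      (by_contra fun hne => hfe (le_antisymm (hmax hne) (he.2 (hD.subset hf))))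

theorem exists_mem_stabilizer_bridgeClass (hZ : T.IsCore Z)
    (hfin : (orbitMk G '' innerEdges T.src T.tgt Z).Finite) {ξ : E → ZMod 2}
    (hξ : T.IsTameEnd ξ) {v : V} (hv : v ∈ Z) :
    ∃ g ∈ MulAction.stabilizer G (T.bridgeClass v), g ≠ 1 := by
  by_contra! htriv
  let C : Set V := {w ∈ Z | T.bridgeClass w = T.bridgeClass v}
  have hC : C.Finite := by
    refine finite_of_finite_image_orbitMk (G := G) (hZ.finite.subset (Set.image_mono fun w hw =>
      hw.1)) (fun _ => ()) (Set.toFinite _) fun w hw g hgw _ => htriv g ?_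
    rw [MulAction.mem_stabilizer_iff, ← hw.2]
    exact hgw.2.trans hw.2.symm
  obtain ⟨e₀, he₀, -⟩ := hZ.exists_mem_cut_ne hfin hC hv ⟨hv, rfl⟩ hξ
  obtain ⟨e, he, hmin⟩ :=
    Set.exists_min_image _ id (T.finite_innerEdges_inter_cut hfin hC) ⟨e₀, he₀⟩
  have hclass := bridgeClass_src_eq_bridgeClass_tgt
    (hZ.notMem_bridges_of_isLeast hfin hC ⟨he, hmin⟩)
  exact he.2 ⟨fun h => ⟨he.1.2, hclass.symm.trans h.2⟩, fun h => ⟨he.1.1, hclass.trans h.2⟩⟩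

end IsCore

section IsFirst

variable [LinearOrder E]

/-- The edge `e` is not a bridge and is the first edge on the way from `v` to the tame end which is
not separated from `v` by bridges. -/
def IsFirst (T : GTree G V E) (v : V) (e : E) : Prop :=
  e ∉ T.bridges ∧ (T.src e = v ∨ T.tgt e = v) ∧
    ∃ ξ, T.IsTameEnd ξ ∧ Set.EqOn ξ (T.path v) T.bridges ∧ ξ e ≠ T.path v e

variable [CovariantClass G E HSMul.hSMul LE.le] [IsCancelSMul G E] {T : GTree G V E}

theorem IsFirst.smul {v : V} {e : E} (h : T.IsFirst v e) (g : G) :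
    T.IsFirst (g • v) (g • e) := by
  obtain ⟨hbridge, hend, ξ, hξ, heq, hne⟩ := h
  refine ⟨smul_mem_bridges_iff.not.mpr hbridge, ?_, _, hξ.translate g, fun f hf => ?_, ?_⟩
  · rw [T.src_smul, T.tgt_smul]
    exact hend.imp (congrArg _) (congrArg _)
  · rw [T.coe_path_smul, translate, translate, heq (smul_mem_bridges g⁻¹ hf)]
  · rw [T.coe_path_smul, translate, translate, inv_smul_smul]
    exact fun h => hne (add_left_cancel h)

theorem IsFirst.unique {v w : V} {e : E} (hv : T.IsFirst v e) (hw : T.IsFirst w e) : v = w := by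
  obtain ⟨hbridge, hend, ξ, hξ, heq, hne⟩ := hv
  obtain ⟨-, hend', η, hη, heq', hne'⟩ := hw
  by_contra hvw
  have hclass : Set.EqOn (T.path (T.src e)) (T.path (T.tgt e)) T.bridges :=
    Quotient.eq''.mp (bridgeClass_src_eq_bridgeClass_tgt hbridge)
  have hpath : T.path (T.src e) e ≠ T.path (T.tgt e) e := by simp [T.path_tgt]
  obtain ⟨hclass, hpath⟩ : Set.EqOn (T.path v) (T.path w) T.bridges ∧ T.path v e ≠ T.path w e := by
    rcases hend with rfl | rfl <;> rcases hend' with rfl | rfl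
    · exact absurd rfl hvw
    · exact ⟨hclass, hpath⟩
    · exact ⟨hclass.symm, hpath.symm⟩
    · exact absurd rfl hvw
  obtain rfl : ξ = η := hξ.eq_of_eqOn_bridges hη (heq.trans (hclass.trans heq'.symm))
  have htwo : ∀ a b c : ZMod 2, a ≠ b → a ≠ c → b = c := by decide
  exact hpath (htwo _ _ _ hne hne')

theorem IsCore.exists_isFirst [IsCancelSMul G V] {Z : Set V} (hZ : T.IsCore Z)
    (hfin : (orbitMk G '' innerEdges T.src T.tgt Z).Finite) {ξ : E → ZMod 2}
    (hξ : T.IsTameEnd ξ) {v : V} (hv : v ∈ Z) :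
    ∃ e ∈ innerEdges T.src T.tgt Z, T.IsFirst v e := by
  obtain ⟨g, hg, g1⟩ := hZ.exists_mem_stabilizer_bridgeClass hfin hξ hv
  obtain ⟨-, η, -, -, hη, heq⟩ := exists_isTameEnd_eqOn_bridges g1 hg
  obtain ⟨e, ⟨hin, hcut⟩, hne⟩ :=
    hZ.exists_mem_cut_ne hfin (Set.finite_singleton v) hv rfl hη
  refine ⟨e, hin, fun hbridge => hne (heq hbridge), ?_, η, hη, heq, hne⟩
  by_contra! hend
  exact hcut (iff_of_false hend.1 hend.2)

theorem IsCore.ncard_image_orbitMk_le [IsCancelSMul G V] {Z : Set V} (hZ : T.IsCore Z)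
    (hfin : (orbitMk G '' innerEdges T.src T.tgt Z).Finite) {ξ : E → ZMod 2}
    (hξ : T.IsTameEnd ξ) : (orbitMk G '' Z).ncard ≤
      (orbitMk G '' innerEdges T.src T.tgt Z \ T.bridgeOrbits).ncard := by
  have hfin' := hfin.sdiff (t := T.bridgeOrbits)
  rw [Set.ncard_eq_toFinset_card _ hZ.finite, Set.ncard_eq_toFinset_card _ hfin']
  refine Finset.card_le_card_of_forall_subsingleton
    (fun x y => ∃ v e, orbitMk G v = x ∧ orbitMk G e = y ∧ T.IsFirst v e) (fun x hx => ?_) ?_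
  · obtain ⟨v, hv, rfl⟩ := hZ.finite.mem_toFinset.mp hx
    obtain ⟨e, he, hfirst⟩ := hZ.exists_isFirst hfin hξ hv
    refine ⟨orbitMk G e, hfin'.mem_toFinset.mpr ⟨Set.mem_image_of_mem _ he, ?_⟩,
      v, e, rfl, rfl, hfirst⟩
    rintro ⟨f, hf, hfe⟩
    obtain ⟨g, rfl⟩ := orbitMk_eq_orbitMk_iff.mp hfe
    exact hfirst.1 (smul_mem_bridges_iff.mp hf)
  · rintro _ - _ ⟨-, v, e, rfl, rfl, he⟩ _ ⟨-, w, f, rfl, hfe, hf⟩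
    obtain ⟨g, rfl⟩ := orbitMk_eq_orbitMk_iff.mp hfe
    rw [hf.unique (he.smul g), orbitMk_smul]

theorem finite_bridgeOrbits_and_ncard_le [IsCancelSMul G V] (T : GTree G V E) {S : Finset G}
    (hS : Subgroup.closure (S : Set G) = ⊤) :
    T.bridgeOrbits.Finite ∧ T.bridgeOrbits.ncard ≤ S.card - 1 := by
  rcases T.bridges.eq_empty_or_nonempty with hempty | ⟨_, ξ, _, hξ, -⟩
  · simp [bridgeOrbits, hempty]
  obtain ⟨Z, hZ⟩ := T.exists_isCore hS
  obtain ⟨hfin, hcard⟩ := hZ.finite_and_ncard_innerEdges_add_one_le hS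
  have hsub : T.bridgeOrbits ⊆ orbitMk G '' innerEdges T.src T.tgt Z :=
    Set.image_mono hZ.bridges_subset
  refine ⟨hfin.subset hsub, ?_⟩
  have hvertices := hZ.ncard_image_orbitMk_le hfin hξ
  have hedges := Set.ncard_sdiff_add_ncard_of_subset hsub hfin
  lia

end IsFirst

end GTree

/-! ### Ranks of intersections -/

section Rank

variable {H K : Type*} [Group H] [Group K]

theorem grank_le_card {S : Finset H} (hS : Subgroup.closure (S : Set H) = ⊤) : grank H ≤ S.card :=
  sInf_le ⟨S, hS, rfl⟩

theorem le_grank_sub_one {x : ℝ≥0∞}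
    (h : ∀ S : Finset H, Subgroup.closure (S : Set H) = ⊤ → x ≤ S.card - 1) :
    x ≤ grank H - 1 := by
  rcases eq_zero_or_pos x with rfl | hpos
  · exact zero_le
  refine ENNReal.le_sub_of_add_le_right ENNReal.one_ne_top (le_sInf ?_)
  rintro _ ⟨S, hS, rfl⟩
  have hle := h S hS
  exact (add_le_add_left hle 1).trans_eq
    (tsub_add_cancel_of_le (tsub_pos_iff_lt.mp (hpos.trans_le hle)).le)

theorem grank_le_of_surjective {f : H →* K} (hf : Function.Surjective f) : grank K ≤ grank H := by
  classical
  refine le_sInf ?_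
  rintro _ ⟨S, hS, rfl⟩
  have hmap : Subgroup.closure ((S.image f : Finset K) : Set K) = ⊤ := by
    rw [Finset.coe_image, ← MonoidHom.map_closure, hS, Subgroup.map_top_of_surjective f hf]
  exact (grank_le_card hmap).trans (Nat.cast_le.mpr Finset.card_image_le)

end Rank

section Subgroup

variable {G X : Type*} [Group G] [MulAction G X] {A B : Subgroup G}

theorem mem_map_conj_iff {g x : G} :
    x ∈ B.map (MulAut.conj g).toMonoidHom ↔ g⁻¹ * x * g ∈ B := by
  rw [Subgroup.mem_map_equiv, MulAut.conj_symm_apply]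

theorem isFreeGroup_of_le [IsFreeGroup B] (h : A ≤ B) : IsFreeGroup A :=
  IsFreeGroup.ofMulEquiv (Subgroup.subgroupOfEquivOfLe h)

theorem isCancelSMul_of_le [IsCancelSMul B X] (h : A ≤ B) : IsCancelSMul A X where
  right_cancel' a b x hab := by
    have hinc := IsCancelSMul.right_cancel (Subgroup.inclusion h a) (Subgroup.inclusion h b) x hab
    exact Subgroup.inclusion_injective h hinc

instance [LE X] [CovariantClass G X HSMul.hSMul LE.le] :
    CovariantClass A X HSMul.hSMul LE.le :=
  ⟨fun a x y h => show (a : G) • x ≤ (a : G) • y from CovariantClass.elim (a : G) h⟩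

theorem exists_eq_mul_mul_of_orbitMk_eq [IsCancelSMul G X] {s s' : G} {x x' : X}
    (hA : orbitMk A x = orbitMk A x') (hB : orbitMk B (s⁻¹ • x) = orbitMk B (s'⁻¹ • x')) :
    ∃ a ∈ A, ∃ b ∈ B, s = a * s' * b ∧ a • x' = x := by
  obtain ⟨a, rfl⟩ := orbitMk_eq_orbitMk_iff.mp hA
  obtain ⟨b, hb⟩ := orbitMk_eq_orbitMk_iff.mp hB
  have hab : (b : G) * s'⁻¹ = s⁻¹ * a :=
    IsCancelSMul.right_cancel _ _ x' (by rw [mul_smul, mul_smul]; exact hb)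
  refine ⟨a, a.2, (b : G)⁻¹, inv_mem b.2, ?_, rfl⟩
  rw [eq_mul_inv_iff_mul_eq, ← mul_inv_eq_iff_eq_mul, mul_assoc, hab, mul_inv_cancel_left]

theorem orbitMk_inf_map_conj_eq [IsCancelSMul G X] {s : G} {x x' : X}
    (hA : orbitMk A x = orbitMk A x') (hB : orbitMk B (s⁻¹ • x) = orbitMk B (s⁻¹ • x')) :
    orbitMk ↥(A ⊓ B.map (MulAut.conj s).toMonoidHom) x =
      orbitMk ↥(A ⊓ B.map (MulAut.conj s).toMonoidHom) x' := by
  obtain ⟨a, ha, b, hb, hab, rfl⟩ := exists_eq_mul_mul_of_orbitMk_eq hA hB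
  refine orbitMk_smul (⟨a, ha, mem_map_conj_iff.mpr ?_⟩ : ↥(A ⊓ B.map _)) x'
  have : s⁻¹ * a * s = b⁻¹ := by
    rw [eq_inv_iff_mul_eq_one, mul_assoc, mul_assoc, ← mul_assoc a, ← hab, inv_mul_cancel]
  exact this ▸ inv_mem hb

theorem exists_grank_inf_le {S : Set G}
    (hS : ∀ g : G, ∃! s, s ∈ S ∧ ∃ a ∈ A, ∃ b ∈ B, g = a * s * b) :
    ∃ s : S, grank ↥(A ⊓ B) ≤ grank ↥(A ⊓ B.map (MulAut.conj (s : G)).toMonoidHom) := by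
  obtain ⟨s, ⟨hs, a, ha, b, hb, h1⟩, -⟩ := hS 1
  obtain rfl : s = a⁻¹ * b⁻¹ := by
    rw [eq_mul_inv_iff_mul_eq]
    exact eq_inv_of_mul_eq_one_right (by rw [← mul_assoc, ← h1])
  refine ⟨⟨_, hs⟩, ?_⟩
  have hconj : (A ⊓ B.map (MulAut.conj (a⁻¹ * b⁻¹)).toMonoidHom).map
      (MulAut.conj a).toMonoidHom = A ⊓ B := by
    ext x
    have hx : (a⁻¹ * b⁻¹)⁻¹ * (a⁻¹ * x * a) * (a⁻¹ * b⁻¹) = b * x * b⁻¹ := by group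
    rw [mem_map_conj_iff, Subgroup.mem_inf, Subgroup.mem_inf, mem_map_conj_iff, hx,
      A.mul_mem_cancel_right ha, A.mul_mem_cancel_left (inv_mem ha),
      B.mul_mem_cancel_right (inv_mem hb), B.mul_mem_cancel_left hb]
  rw [← hconj]
  exact grank_le_of_surjective (MonoidHom.subgroupMap_surjective _ _)

end Subgroup

theorem tsum_encard_image_le {ι β γ : Type*} {α : ι → Type*} {P : ι → Set γ} {R : Set β}
    (p : ∀ i, γ → α i) (f : ι → γ → β) (hf : ∀ i, Set.MapsTo (f i) (P i) R)
    (hp : ∀ i j x y, f i x = f j y → (⟨i, p i x⟩ : Σ i, α i) = ⟨j, p j y⟩) :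
    ∑' i, ((p i '' P i).encard : ℝ≥0∞) ≤ R.encard := by
  choose g hg hpg using fun x : Σ i, p i '' P i => x.2.2
  simp_rw [← ENNReal.tsum_set_one]
  rw [← ENNReal.tsum_sigma]
  refine ENNReal.tsum_comp_le_tsum_of_injective
    (f := fun x => (⟨f x.1 (g x), hf x.1 (hg x)⟩ : R)) (fun x y hxy => ?_) fun _ => 1
  have hsigma := hp _ _ _ _ (congrArg Subtype.val hxy)
  rw [hpg, hpg] at hsigma
  exact Function.Injective.sigma_map Function.injective_id
    (fun _ => Subtype.val_injective) hsigma

namespace GTree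

variable {G V E : Type*} [Group G] [MulAction G V] [MulAction G E] [LinearOrder E]
  [CovariantClass G E HSMul.hSMul LE.le] [IsCancelSMul G E]

theorem encard_bridgeOrbits_le_grank_sub_one [IsCancelSMul G V] (T : GTree G V E) :
    (T.bridgeOrbits.encard : ℝ≥0∞) ≤ grank G - 1 := by
  refine le_grank_sub_one fun S hS => ?_
  obtain ⟨hfin, hcard⟩ := finite_bridgeOrbits_and_ncard_le T hS
  rw [← hfin.cast_ncard_eq, ENat.toENNReal_coe]
  exact_mod_cast hcard

theorem grank_sub_one_le_encard_bridgeOrbits [IsCancelSMul G V] [IsFreeGroup G]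
    (T : GTree G V E) : grank G - 1 ≤ T.bridgeOrbits.encard := by
  rcases T.bridgeOrbits.finite_or_infinite with hfin | hinf
  · obtain ⟨S, hS, hcard⟩ := exists_closure_eq_top_and_card_le_ncard_bridgeOrbits hfin
    rw [← hfin.cast_ncard_eq, ENat.toENNReal_coe, tsub_le_iff_right]
    exact (grank_le_card hS).trans (mod_cast hcard)
  · rw [hinf.encard_eq, ENat.toENNReal_top]
    exact le_top

theorem tsum_encard_bridgeOrbits_le (T : GTree G V E) {A B : Subgroup G} {S : Set G}
    (hS : ∀ g : G, ∃! s, s ∈ S ∧ ∃ a ∈ A, ∃ b ∈ B, g = a * s * b) :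
    ∑' s : S, ((T.restrict (A ⊓ B.map (MulAut.conj (s : G)).toMonoidHom)).bridgeOrbits.encard
        : ℝ≥0∞) ≤
      (T.restrict A).bridgeOrbits.encard * (T.restrict B).bridgeOrbits.encard := by
  rw [← ENat.toENNReal_mul, ← Set.encard_prod]
  -- A bridge `e` of `A ∩ sBs⁻¹` yields the bridges `e` of `A` and `s⁻¹ • e` of `B`.
  refine tsum_encard_image_le _ (fun (s : S) e => (orbitMk A e, orbitMk B ((s : G)⁻¹ • e)))
    (fun s e he => ⟨⟨e, ?_, rfl⟩, ⟨(s : G)⁻¹ • e, ?_, rfl⟩⟩) fun s s' e e' h => ?_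
  · simpa only [one_smul] using smul_mem_bridges_restrict (g := 1) (K := A)
      (fun h hh => by simpa using hh.1) he
  · exact smul_mem_bridges_restrict (fun h hh => by
      simpa only [inv_inv] using mem_map_conj_iff.mp hh.2) he
  · obtain ⟨hA, hB⟩ := Prod.mk.inj h
    obtain ⟨a, ha, b, hb, hab, -⟩ := exists_eq_mul_mul_of_orbitMk_eq hA hB
    obtain rfl : s = s' := Subtype.ext ((hS s).unique
      ⟨s.2, 1, one_mem A, 1, one_mem B, by rw [one_mul, mul_one]⟩ ⟨s'.2, a, ha, b, hb, hab⟩)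
    rw [orbitMk_inf_map_conj_eq hA hB]

theorem tsum_grank_sub_one_le (T : GTree G V E) {A B : Subgroup G} [IsCancelSMul A V]
    [IsCancelSMul B V] [IsFreeGroup A] {S : Set G}
    (hS : ∀ g : G, ∃! s, s ∈ S ∧ ∃ a ∈ A, ∃ b ∈ B, g = a * s * b) :
    ∑' s : S, (grank ↥(A ⊓ B.map (MulAut.conj (s : G)).toMonoidHom) - 1) ≤
      (grank A - 1) * (grank B - 1) := by
  have hinf (s : S) : grank ↥(A ⊓ B.map (MulAut.conj (s : G)).toMonoidHom) - 1 ≤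
      (T.restrict (A ⊓ B.map (MulAut.conj (s : G)).toMonoidHom)).bridgeOrbits.encard := by
    have hle : A ⊓ B.map (MulAut.conj (s : G)).toMonoidHom ≤ A := inf_le_left
    have := isFreeGroup_of_le hle
    have := isCancelSMul_of_le (X := V) hle
    exact grank_sub_one_le_encard_bridgeOrbits _
  calc _ ≤ _ := ENNReal.tsum_le_tsum hinf
    _ ≤ _ := T.tsum_encard_bridgeOrbits_le hS
    _ ≤ _ := mul_le_mul' (T.restrict A).encard_bridgeOrbits_le_grank_sub_one
      (T.restrict B).encard_bridgeOrbits_le_grank_sub_one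

end GTree

/-! ### Left orders on free products -/

section OrderSign

variable {α : Type*} [LinearOrder α]

/-- The sign of the comparison of `a` and `b`: it is `1` if `a < b` and `-1` if `b < a`. -/
def orderSign (a b : α) : ℤ := if a < b then 1 else if b < a then -1 else 0

theorem orderSign_swap (a b : α) : orderSign b a = -orderSign a b := by
  unfold orderSign
  split_ifs <;> first | rfl | order

theorem odd_orderSign {a b : α} (h : a ≠ b) : Odd (orderSign a b) := by
  rcases lt_or_gt_of_ne h with h | h <;> simp [orderSign, h, h.not_gt]

theorem abs_orderSign_le_one (a b : α) : |orderSign a b| ≤ 1 := by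
  unfold orderSign
  split_ifs <;> simp

theorem abs_orderSign_add_sub_le_one {a b c : α} (hab : a ≠ b) (hbc : b ≠ c) (hac : a ≠ c) :
    |orderSign a b + orderSign b c - orderSign a c| ≤ 1 := by
  unfold orderSign
  split_ifs <;> first | (exfalso; order) | norm_num

theorem orderSign_mul_left [Mul α] [MulLeftStrictMono α] [MulLeftReflectLT α] (c a b : α) :
    orderSign (c * a) (c * b) = orderSign a b := by
  simp only [orderSign, mul_lt_mul_iff_left]

end OrderSign

theorem exists_linearOrder_mulLeftMono_of_int_valued {G : Type*} [Group G] (f : G → ℤ)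
    (hinv : ∀ x, f x⁻¹ = -f x) (hmul : ∀ x y, f x + f y - 1 ≤ f (x * y))
    (hne : ∀ x, x ≠ 1 → f x ≠ 0) : ∃ _ : LinearOrder G, MulLeftMono G := by
  classical
  have hone : f 1 = 0 := by
    have h := hinv 1
    rw [inv_one] at h
    lia
  let r (x y : G) : Prop := 0 < f (x⁻¹ * y)
  have hr : IsStrictTotalOrder G r :=
    { irrefl x := by simp [r, hone]
      trans x y z hxy hyz := by
        have h := hmul (x⁻¹ * y) (y⁻¹ * z)
        rw [mul_assoc, mul_inv_cancel_left] at h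
        simp only [r] at hxy hyz ⊢
        lia
      trichotomous x y hxy hyx := by
        by_contra h
        have hxy0 := hne (x⁻¹ * y) (inv_mul_eq_one.not.mpr h)
        have hswap := hinv (x⁻¹ * y)
        rw [mul_inv_rev, inv_inv] at hswap
        simp only [r] at hxy hyx
        lia }
  let := linearOrderOfSTO r
  refine ⟨inferInstance, ⟨fun c => ?_⟩⟩
  have hmono : StrictMono (c * ·) := fun x y (hxy : r x y) =>
    show r (c * x) (c * y) by simpa only [r, mul_inv_rev, mul_assoc, inv_mul_cancel_left] using hxy
  exact hmono.monotone

theorem exists_linearOrder_mulLeftMono_of_isLinearOrder {G : Type*} [Mul G] {le : G → G → Prop}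
    (hle : IsLinearOrder G le) (hmul : ∀ a b c, le a b → le (c * a) (c * b)) :
    ∃ _ : LinearOrder G, MulLeftMono G := by
  classical
  let : LinearOrder G :=
    { le := le
      le_refl := refl_of le
      le_trans _ _ _ := trans_of le
      le_antisymm _ _ := antisymm_of le
      le_total := total_of le
      toDecidableLE := Classical.decRel le }
  exact ⟨inferInstance, ⟨fun c _ _ => hmul _ _ c⟩⟩

namespace FreeProductOrder

open Monoid.CoprodI

variable {ι : Type*} {Gs : ι → Type*}

/-- The sign of the comparison of `i` with the index of the first letter, if any. -/
def headSign [LinearOrder ι] (i : ι) : List (Σ i, Gs i) → ℤ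
  | [] => 0
  | x :: _ => orderSign i x.1

theorem headSign_nil [LinearOrder ι] (i : ι) : headSign i ([] : List (Σ i, Gs i)) = 0 := rfl

theorem abs_headSign_le_one [LinearOrder ι] (i : ι) (u : List (Σ i, Gs i)) :
    |headSign i u| ≤ 1 := by
  cases u with
  | nil => simp [headSign]
  | cons x u => exact abs_orderSign_le_one _ _

variable [∀ i, Group (Gs i)]

/-- The condition on lists of letters satisfied by the elements of `Monoid.CoprodI.Word`. -/
def IsReduced (u : List (Σ i, Gs i)) : Prop :=
  (∀ x ∈ u, x.2 ≠ 1) ∧ u.IsChain fun x y => x.1 ≠ y.1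

theorem isReduced_toList (w : Word Gs) : IsReduced w.toList := ⟨fun _ => w.ne_one _, w.chain_ne⟩

theorem IsReduced.tail {x : Σ i, Gs i} {u : List (Σ i, Gs i)} (h : IsReduced (x :: u)) :
    IsReduced u :=
  ⟨fun y hy => h.1 y (List.mem_cons_of_mem x hy), h.2.tail⟩

theorem IsReduced.fst_ne {x y : Σ i, Gs i} {u : List (Σ i, Gs i)} (h : IsReduced (x :: y :: u)) :
    x.1 ≠ y.1 :=
  (List.isChain_cons_cons.mp h.2).1

variable [LinearOrder ι] [∀ i, LinearOrder (Gs i)]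

/-- The number of letters greater than `1` and ascents of indices, minus the number of letters
less than `1` and descents of indices. -/
def excess : List (Σ i, Gs i) → ℤ
  | [] => 0
  | x :: u => orderSign 1 x.2 + headSign x.1 u + excess u

theorem excess_nil : excess ([] : List (Σ i, Gs i)) = 0 := rfl

/-- The difference between the contribution of the passage from `x` to `y` to `comparison` and its
contributions to `excess`. -/
def letterDefect (x y : Σ i, Gs i) : ℤ :=
  if h : x.1 = y.1 then orderSign 1 x.2 - orderSign 1 y.2 + orderSign (h ▸ x.2) y.2
  else orderSign x.1 y.1

theorem letterDefect_mk {i : ι} (a b : Gs i) :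
    letterDefect ⟨i, a⟩ ⟨i, b⟩ = orderSign 1 a - orderSign 1 b + orderSign a b :=
  dif_pos rfl

theorem letterDefect_of_ne {x y : Σ i, Gs i} (h : x.1 ≠ y.1) :
    letterDefect x y = orderSign x.1 y.1 :=
  dif_neg h

theorem letterDefect_swap (x y : Σ i, Gs i) : letterDefect y x = -letterDefect x y := by
  obtain ⟨i, a⟩ := x
  obtain ⟨j, b⟩ := y
  rcases eq_or_ne i j with rfl | h
  · rw [letterDefect_mk, letterDefect_mk, orderSign_swap a b]
    ring
  · rw [letterDefect_of_ne (x := ⟨i, a⟩) h, letterDefect_of_ne (x := ⟨j, b⟩) h.symm, orderSign_swap]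

theorem abs_letterDefect_le_one {x y : Σ i, Gs i} (hx : x.2 ≠ 1) (hy : y.2 ≠ 1) (hxy : x ≠ y) :
    |letterDefect x y| ≤ 1 := by
  obtain ⟨i, a⟩ := x
  obtain ⟨j, b⟩ := y
  rcases eq_or_ne i j with rfl | h
  · rw [letterDefect_mk, sub_add_eq_add_sub]
    exact abs_orderSign_add_sub_le_one hx.symm (fun h => hxy (by rw [h])) hy.symm
  · rw [letterDefect_of_ne h]
    exact abs_orderSign_le_one _ _

/-- The sum of the signs of the turns on the path from `u` to `v` in the Bass–Serre tree, where
`u` and `v` are reduced lists of letters: at the coset of a factor the path passes between two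
elements of the coset, at an element of the free product it passes between two indices. -/
def comparison : List (Σ i, Gs i) → List (Σ i, Gs i) → ℤ
  | [], v => excess v
  | x :: u, [] => -excess (x :: u)
  | x :: u, y :: v =>
    if x = y then comparison u v else excess (y :: v) - excess (x :: u) + letterDefect x y

theorem comparison_nil_left (v : List (Σ i, Gs i)) : comparison [] v = excess v := by
  rw [comparison]

theorem comparison_nil_right (u : List (Σ i, Gs i)) : comparison u [] = -excess u := by
  cases u <;> simp [comparison, excess]

theorem comparison_cons_self (x : Σ i, Gs i) (u v : List (Σ i, Gs i)) :
    comparison (x :: u) (x :: v) = comparison u v :=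
  if_pos rfl

theorem comparison_cons_of_ne {x y : Σ i, Gs i} (h : x ≠ y) (u v : List (Σ i, Gs i)) :
    comparison (x :: u) (y :: v) = excess (y :: v) - excess (x :: u) + letterDefect x y :=
  if_neg h

theorem comparison_swap (u v : List (Σ i, Gs i)) : comparison v u = -comparison u v := by
  induction u generalizing v with
  | nil => rw [comparison_nil_right, comparison_nil_left]
  | cons x u ih =>
    cases v with
    | nil => rw [comparison_nil_right, comparison_nil_left, neg_neg]
    | cons y v =>
      rcases eq_or_ne x y with rfl | h
      · rw [comparison_cons_self, comparison_cons_self, ih]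
      · rw [comparison_cons_of_ne h, comparison_cons_of_ne h.symm, letterDefect_swap]
        ring

theorem odd_excess {u : List (Σ i, Gs i)} (hu : IsReduced u) (hne : u ≠ []) : Odd (excess u) := by
  induction u with
  | nil => exact absurd rfl hne
  | cons x u ih =>
    have hx : Odd (orderSign 1 x.2) := odd_orderSign (hu.1 x List.mem_cons_self).symm
    cases u with
    | nil => simpa only [excess, headSign, add_zero] using hx
    | cons y v =>
      have hxy : Odd (headSign x.1 (y :: v)) := odd_orderSign hu.fst_ne
      exact (hx.add_odd hxy).add_odd (ih hu.tail (List.cons_ne_nil y v))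

theorem abs_comparison_cons_self_sub_add_le_one {x : Σ i, Gs i} {u v : List (Σ i, Gs i)}
    (hu : IsReduced (x :: u)) (hv : IsReduced (x :: v))
    (ih : |comparison u v - excess v + excess u| ≤ 1) :
    |comparison (x :: u) (x :: v) - excess (x :: v) + excess (x :: u)| ≤ 1 := by
  have hcons : comparison (x :: u) (x :: v) - excess (x :: v) + excess (x :: u) =
      comparison u v - excess v + excess u + (headSign x.1 u - headSign x.1 v) := by
    rw [comparison_cons_self, excess, excess]
    ring
  rw [hcons]
  rcases u with _ | ⟨a, u⟩
  · rw [comparison_nil_left, excess_nil, sub_self, add_zero, zero_add, headSign_nil, zero_sub,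
      abs_neg]
    exact abs_headSign_le_one x.1 v
  rcases v with _ | ⟨b, v⟩
  · rw [comparison_nil_right, excess_nil, sub_zero, neg_add_cancel, zero_add, headSign_nil,
      sub_zero]
    exact abs_headSign_le_one x.1 (a :: u)
  rcases eq_or_ne a.1 b.1 with hab | hab
  · rwa [headSign, headSign, hab, sub_self, add_zero]
  · rw [comparison_cons_of_ne fun h => hab (by rw [h]), letterDefect_of_ne hab]
    convert abs_orderSign_add_sub_le_one hu.fst_ne hab hv.fst_ne using 2
    rw [headSign, headSign]
    ring

theorem abs_comparison_sub_add_le_one {u v : List (Σ i, Gs i)} (hu : IsReduced u)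
    (hv : IsReduced v) : |comparison u v - excess v + excess u| ≤ 1 := by
  induction u generalizing v with
  | nil => simp [comparison_nil_left, excess_nil]
  | cons x u ih =>
    rcases v with _ | ⟨y, v⟩
    · simp [comparison_nil_right, excess_nil]
    rcases eq_or_ne x y with rfl | h
    · exact abs_comparison_cons_self_sub_add_le_one hu hv (ih hu.tail hv.tail)
    · rw [comparison_cons_of_ne h, add_sub_right_comm, sub_sub_cancel_left, neg_add_eq_sub,
        sub_add_cancel]
      exact abs_letterDefect_le_one (hu.1 x List.mem_cons_self) (hv.1 y List.mem_cons_self) h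

section Rcons

variable {i : ι} {p q : Word.Pair Gs i}

theorem comparison_rcons_of_head_eq_one (hp : p.head = 1) (hq : q.head ≠ 1) :
    comparison (Word.rcons p).toList (Word.rcons q).toList =
      orderSign p.head q.head + (headSign i q.tail.toList + excess q.tail.toList) -
        (headSign i p.tail.toList + excess p.tail.toList) := by
  have hne := Word.fstIdx_ne_iff.mp p.fstIdx_ne
  rw [Word.rcons, dif_pos hp, Word.rcons, dif_neg hq, Word.cons_toList, hp]
  generalize p.tail.toList = w at hne
  rcases w with _ | ⟨x, u⟩
  · rw [comparison_nil_left, excess, excess, headSign]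
    ring
  · have hx : i ≠ x.1 := hne x (by simp)
    rw [comparison_cons_of_ne fun h => hx (by rw [h]), letterDefect_of_ne hx.symm,
      orderSign_swap i x.1, excess, headSign]
    ring

theorem comparison_rcons_of_ne (h : p.head ≠ q.head) :
    comparison (Word.rcons p).toList (Word.rcons q).toList =
      orderSign p.head q.head + (headSign i q.tail.toList + excess q.tail.toList) -
        (headSign i p.tail.toList + excess p.tail.toList) := by
  by_cases hp : p.head = 1
  · exact comparison_rcons_of_head_eq_one hp fun hq => h (hp.trans hq.symm)
  by_cases hq : q.head = 1
  · rw [comparison_swap, comparison_rcons_of_head_eq_one hq hp, orderSign_swap p.head]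
    ring
  · rw [Word.rcons, dif_neg hp, Word.rcons, dif_neg hq, Word.cons_toList, Word.cons_toList,
      comparison_cons_of_ne fun h' => h (eq_of_heq (Sigma.mk.inj h').2), letterDefect_mk, excess,
      excess]
    ring

theorem comparison_rcons_of_eq (h : p.head = q.head) :
    comparison (Word.rcons p).toList (Word.rcons q).toList =
      comparison p.tail.toList q.tail.toList := by
  by_cases hp : p.head = 1
  · rw [Word.rcons, dif_pos hp, Word.rcons, dif_pos (h ▸ hp)]
  · rw [Word.rcons, dif_neg hp, Word.rcons, dif_neg (h ▸ hp), Word.cons_toList, Word.cons_toList, h,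
      comparison_cons_self]

end Rcons

/-- The excess of the reduced word of an element of a free product. -/
def wordExcess (g : Monoid.CoprodI Gs) : ℤ := excess (g • (Word.empty : Word Gs)).toList

theorem wordExcess_ne_zero {x : Monoid.CoprodI Gs} (hx : x ≠ 1) : wordExcess x ≠ 0 := by
  have hne : (x • (Word.empty : Word Gs)).toList ≠ [] := fun h => hx <| by
    have hempty : x • (Word.empty : Word Gs) = Word.empty := Word.ext h
    simpa [Word.prod_smul] using congrArg Word.prod hempty
  intro h0
  have hodd : Odd (wordExcess x) := odd_excess (isReduced_toList _) hne
  exact absurd (h0 ▸ hodd) Int.not_odd_zero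

variable [∀ i, MulLeftMono (Gs i)]

theorem comparison_smul (g : Monoid.CoprodI Gs) (u v : Word Gs) :
    comparison (g • u).toList (g • v).toList = comparison u.toList v.toList := by
  induction g using Monoid.CoprodI.induction_on generalizing u v with
  | one => rw [one_smul, one_smul]
  | of i m =>
    conv_rhs => rw [← (Word.equivPair i).symm_apply_apply u,
      ← (Word.equivPair i).symm_apply_apply v, Word.equivPair_symm, Word.equivPair_symm]
    rw [Word.of_smul_def, Word.of_smul_def]
    by_cases h : (Word.equivPair i u).head = (Word.equivPair i v).head
    · rw [comparison_rcons_of_eq h, comparison_rcons_of_eq (congrArg (m * ·) h)]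
    · rw [comparison_rcons_of_ne h, comparison_rcons_of_ne (mul_right_injective m |>.ne h),
        orderSign_mul_left]
  | mul x y hx hy => rw [mul_smul, mul_smul, hx, hy]

theorem comparison_smul_empty (x y : Monoid.CoprodI Gs) :
    comparison (x • (Word.empty : Word Gs)).toList (y • (Word.empty : Word Gs)).toList =
      wordExcess (x⁻¹ * y) := by
  rw [← comparison_smul x⁻¹, inv_smul_smul, smul_smul, Word.empty_toList, comparison_nil_left,
    wordExcess]

theorem wordExcess_inv (x : Monoid.CoprodI Gs) : wordExcess x⁻¹ = -wordExcess x := by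
  have h := comparison_smul_empty x 1
  rwa [comparison_swap, comparison_smul_empty, inv_one, one_mul, mul_one, eq_comm] at h

theorem add_sub_one_le_wordExcess_mul (x y : Monoid.CoprodI Gs) :
    wordExcess x + wordExcess y - 1 ≤ wordExcess (x * y) := by
  have h := abs_comparison_sub_add_le_one (isReduced_toList (x⁻¹ • (Word.empty : Word Gs)))
    (isReduced_toList (y • Word.empty))
  rw [comparison_smul_empty, inv_inv, ← wordExcess, ← wordExcess, wordExcess_inv, abs_le] at h
  lia

end FreeProductOrder

theorem exists_linearOrder_mulLeftMono_coprodI {ι : Type*} {Gs : ι → Type*} [∀ i, Group (Gs i)]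
    (h : ∀ i, ∃ _ : LinearOrder (Gs i), MulLeftMono (Gs i)) :
    ∃ _ : LinearOrder (Monoid.CoprodI Gs), MulLeftMono (Monoid.CoprodI Gs) := by
  classical
  let : LinearOrder ι := linearOrderOfSTO WellOrderingRel
  choose hord hmono using h
  exact exists_linearOrder_mulLeftMono_of_int_valued FreeProductOrder.wordExcess
    FreeProductOrder.wordExcess_inv FreeProductOrder.add_sub_one_le_wordExcess_mul
    fun _ => FreeProductOrder.wordExcess_ne_zero

/-! ### The Bass–Serre tree of a free product -/

namespace BassSerre

open Monoid

variable {ι : Type*} (Gs : ι → Type*) [∀ i, Group (Gs i)]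

/-- The edges of the Bass–Serre tree of a free product, ordered lexicographically: `(g, i)` joins
the element `g` to its coset of the factor `Gs i`. -/
def Edge : Type _ := CoprodI Gs × ι

/-- The vertices of the Bass–Serre tree of a free product: the group elements and the left
cosets of the factors. -/
inductive Vertex
  | elt (g : CoprodI Gs)
  | coset (i : ι) (c : CoprodI Gs ⧸ (CoprodI.of : Gs i →* CoprodI Gs).range)

instance : MulAction (CoprodI Gs) (Vertex Gs) where
  smul
    | g, .elt h => .elt (g * h)
    | g, .coset i c => .coset i (g • c)
  one_smul
    | .elt h => congrArg Vertex.elt (one_mul h)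
    | .coset i c => congrArg (Vertex.coset i) (one_smul _ c)
  mul_smul
    | g, h, .elt k => congrArg Vertex.elt (mul_assoc g h k)
    | g, h, .coset i c => congrArg (Vertex.coset i) (mul_smul g h c)

instance : MulAction (CoprodI Gs) (Edge Gs) where
  smul g e := (g * e.1, e.2)
  one_smul _ := Prod.ext (one_mul _) rfl
  mul_smul _ _ _ := Prod.ext (mul_assoc _ _ _) rfl

instance : IsCancelSMul (CoprodI Gs) (Edge Gs) where
  left_cancel' g _ _ h := smul_left_cancel g h
  right_cancel' _ _ _ h := mul_right_cancel (congrArg Prod.fst h)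

noncomputable instance [LinearOrder (CoprodI Gs)] [LinearOrder ι] : LinearOrder (Edge Gs) :=
  inferInstanceAs (LinearOrder (CoprodI Gs ×ₗ ι))

instance [LinearOrder (CoprodI Gs)] [LinearOrder ι] [MulLeftMono (CoprodI Gs)] :
    CovariantClass (CoprodI Gs) (Edge Gs) HSMul.hSMul LE.le where
  elim g e f h := by
    rcases Prod.Lex.toLex_le_toLex (x := e) (y := f) |>.mp h with h | ⟨h, h'⟩
    · exact Prod.Lex.toLex_le_toLex (x := g • e) (y := g • f) |>.mpr
        (.inl (mul_lt_mul_right h g))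
    · exact Prod.Lex.toLex_le_toLex (x := g • e) (y := g • f) |>.mpr
        (.inr ⟨congrArg (g * ·) h, h'⟩)

attribute [local instance] Finsupp.comapDistribMulAction

/-- The chain consisting of the edge from `1` to the factor `Gs i`. -/
noncomputable def baseEdge (i : ι) : Edge Gs →₀ ZMod 2 :=
  Finsupp.single ((1, i) : CoprodI Gs × ι) 1

theorem smul_baseEdge (g : CoprodI Gs) (i : ι) :
    g • baseEdge Gs i = Finsupp.single ((g, i) : CoprodI Gs × ι) 1 :=
  (Finsupp.comapSMul_single g _ _).trans
    (congrArg (Finsupp.single · 1) (Prod.ext (mul_one g) rfl))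

/-- The affine action of a free product on the mod 2 chains of edges for which each factor
fixes the chain of its base edge. It sends `0` to the chain of the path from `1` to `g`. -/
noncomputable def affineAction : CoprodI Gs →* Equiv.Perm (Edge Gs →₀ ZMod 2) :=
  CoprodI.lift fun i => (MulAut.conj (Equiv.addLeft (baseEdge Gs i))).toMonoidHom.comp
    ((MulAction.toPermHom (CoprodI Gs) (Edge Gs →₀ ZMod 2)).comp CoprodI.of)

theorem affineAction_of (i : ι) (x : Gs i) (p : Edge Gs →₀ ZMod 2) :
    affineAction Gs (CoprodI.of x) p =
      baseEdge Gs i + (CoprodI.of x : CoprodI Gs) • (-baseEdge Gs i + p) := by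
  simp [affineAction]

theorem affineAction_of_baseEdge (i : ι) (x : Gs i) :
    affineAction Gs (CoprodI.of x) (baseEdge Gs i) = baseEdge Gs i := by
  rw [affineAction_of, neg_add_cancel, smul_zero, add_zero]

theorem affineAction_eq_add_smul (g : CoprodI Gs) (p : Edge Gs →₀ ZMod 2) :
    affineAction Gs g p = affineAction Gs g 0 + g • p := by
  induction g using CoprodI.induction_on generalizing p with
  | one => rw [map_one, Equiv.Perm.one_apply, Equiv.Perm.one_apply, one_smul, zero_add]
  | of i x => rw [affineAction_of, affineAction_of, add_zero, smul_add, add_assoc]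
  | mul g h hg hh =>
    rw [map_mul, Equiv.Perm.mul_apply, Equiv.Perm.mul_apply, hg, hh, hg (affineAction Gs h 0),
      smul_add, mul_smul, add_assoc]

/-- The chain of edges on the path from the base vertex `1` to a given vertex. -/
noncomputable def path : Vertex Gs → Edge Gs →₀ ZMod 2
  | .elt g => affineAction Gs g 0
  | .coset i c => Quotient.liftOn' c (fun g => affineAction Gs g (baseEdge Gs i)) <| by
      intro g h hgh
      obtain ⟨x, hx⟩ := QuotientGroup.leftRel_apply.mp hgh
      rw [← mul_inv_cancel_left g h, ← hx, map_mul, Equiv.Perm.mul_apply,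
        affineAction_of_baseEdge]

variable {Gs} in
theorem mem_of_forall_elt_mem_iff_coset_mem {Z : Set (Vertex Gs)} (hone : .elt 1 ∈ Z)
    (hZ : ∀ e : Edge Gs, .elt e.1 ∈ Z ↔ .coset e.2 e.1 ∈ Z) (v : Vertex Gs) : v ∈ Z := by
  have hinl (g h : CoprodI Gs) : .elt h ∈ Z ↔ .elt (h * g) ∈ Z := by
    induction g using CoprodI.induction_on generalizing h with
    | one => rw [mul_one]
    | of i x =>
      exact (hZ (h, i)).trans <| Iff.trans
        (by rw [QuotientGroup.mk_mul_of_mem h (MonoidHom.mem_range.mpr ⟨x, rfl⟩)])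
        (hZ (h * CoprodI.of x, i)).symm
    | mul g g' hg hg' => rw [hg, hg', mul_assoc]
  have hall (g : CoprodI Gs) : .elt g ∈ Z := by
    simpa only [one_mul] using (hinl g 1).mp hone
  rcases v with g | ⟨i, c⟩
  · exact hall g
  · induction c using QuotientGroup.induction_on with
    | H g => exact (hZ (g, i)).mp (hall g)

/-- The Bass–Serre tree of a free product of groups. -/
noncomputable def tree : GTree (CoprodI Gs) (Vertex Gs) (Edge Gs) where
  src e := .elt e.1
  tgt e := .coset e.2 e.1
  src_smul _ _ := rfl
  tgt_smul _ _ := rfl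
  base := .elt 1
  path := path Gs
  path_base := by rw [path, map_one, Equiv.Perm.one_apply]
  path_tgt e := (affineAction_eq_add_smul Gs e.1 _).trans
    (congrArg _ (smul_baseEdge Gs e.1 e.2))
  connected _ := mem_of_forall_elt_mem_iff_coset_mem

variable {Gs} in
theorem isCancelSMul_vertex {A : Subgroup (CoprodI Gs)}
    (hA : ∀ (i : ι) (g : CoprodI Gs), A ⊓ Subgroup.map (MulAut.conj g).toMonoidHom
      (MonoidHom.range (CoprodI.of : Gs i →* CoprodI Gs)) = ⊥) :
    IsCancelSMul A (Vertex Gs) where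
  left_cancel' a _ _ h := smul_left_cancel a h
  right_cancel' a b v h := by
    have hfix : ((b⁻¹ * a : A) : CoprodI Gs) • v = v := by
      rw [← Subgroup.smul_def, mul_smul, h, inv_smul_smul]
    rw [eq_comm, ← inv_mul_eq_one]
    ext
    rcases v with g | ⟨i, c⟩
    · exact mul_eq_right.mp (Vertex.elt.inj hfix)
    · induction c using QuotientGroup.induction_on with
      | H g =>
        have hmem := QuotientGroup.eq.mp (eq_of_heq (Vertex.coset.inj hfix).2).symm
        rw [OneMemClass.coe_one, ← Subgroup.mem_bot, ← hA i g]
        exact ⟨SetLike.coe_mem _, mem_map_conj_iff.mpr (by rwa [mul_assoc])⟩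

end BassSerre

theorem AMS_strengthened_hanna_neumann_general {ι : Type*} (Gs : ι → Type*) [∀ i, Group (Gs i)]
    (hLO : ∀ i, ∃ le : Gs i → Gs i → Prop, IsLinearOrder (Gs i) le ∧
        ∀ a b c : Gs i, le a b → le (c * a) (c * b))
    (A B : Subgroup (Monoid.CoprodI Gs)) [IsFreeGroup A]
    (hA : ∀ (i : ι) (g : Monoid.CoprodI Gs),
        A ⊓ Subgroup.map (MulAut.conj g).toMonoidHom
          (MonoidHom.range (Monoid.CoprodI.of : Gs i →* Monoid.CoprodI Gs)) = ⊥)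
    (hB : ∀ (i : ι) (g : Monoid.CoprodI Gs),
        B ⊓ Subgroup.map (MulAut.conj g).toMonoidHom
          (MonoidHom.range (Monoid.CoprodI.of : Gs i →* Monoid.CoprodI Gs)) = ⊥)
    (S : Set (Monoid.CoprodI Gs))
    (hS : ∀ g : Monoid.CoprodI Gs, ∃! s, s ∈ S ∧ ∃ a ∈ A, ∃ b ∈ B, g = a * s * b) :
    (∑' s : S,
        (grank ↥(A ⊓ Subgroup.map (MulAut.conj (s : Monoid.CoprodI Gs)).toMonoidHom B)
          - 1) ≤ (grank A - 1) * (grank B - 1)) ∧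
      grank ↥(A ⊓ B) - 1 ≤ (grank A - 1) * (grank B - 1) := by
  classical
  obtain ⟨_, _⟩ := exists_linearOrder_mulLeftMono_coprodI fun i =>
    let ⟨_, hle, hmul⟩ := hLO i
    exists_linearOrder_mulLeftMono_of_isLinearOrder hle hmul
  let : LinearOrder ι := linearOrderOfSTO WellOrderingRel
  have := BassSerre.isCancelSMul_vertex hA
  have := BassSerre.isCancelSMul_vertex hB
  have hsum := (BassSerre.tree Gs).tsum_grank_sub_one_le hS
  obtain ⟨s, hs⟩ := exists_grank_inf_le hS
  exact ⟨hsum, (tsub_le_tsub_right hs 1).trans ((ENNReal.le_tsum s).trans hsum)⟩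

/-- Theorem AMS: let `G = ∗_{i ∈ I} G_i` be a free product of left-orderable groups, let
`A, B` be finitely generated free subgroups of `G` intersecting every conjugate of every
free factor trivially, and let `S` be a system of representatives of the double cosets
`AsB` in `G`.  Then `∑_{s ∈ S} r̄ank(A ∩ sBs⁻¹) ≤ r̄ank(A) ⬝ r̄ank(B)`; in particular,
`r̄ank(A ∩ B) ≤ r̄ank(A) ⬝ r̄ank(B)`, where `r̄ank(H) = max (0, rank H - 1)`. -/
theorem AMS_strengthened_hanna_neumann {ι : Type*} (Gs : ι → Type*) [∀ i, Group (Gs i)]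
    (hLO : ∀ i, ∃ le : Gs i → Gs i → Prop, IsLinearOrder (Gs i) le ∧
        ∀ a b c : Gs i, le a b → le (c * a) (c * b))
    (A B : Subgroup (Monoid.CoprodI Gs)) [Group.FG A] [Group.FG B]
    [IsFreeGroup A] [IsFreeGroup B]
    (hA : ∀ (i : ι) (g : Monoid.CoprodI Gs),
        A ⊓ Subgroup.map (MulAut.conj g).toMonoidHom
          (MonoidHom.range (Monoid.CoprodI.of : Gs i →* Monoid.CoprodI Gs)) = ⊥)
    (hB : ∀ (i : ι) (g : Monoid.CoprodI Gs),
        B ⊓ Subgroup.map (MulAut.conj g).toMonoidHom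
          (MonoidHom.range (Monoid.CoprodI.of : Gs i →* Monoid.CoprodI Gs)) = ⊥)
    (S : Set (Monoid.CoprodI Gs))
    (hS : ∀ g : Monoid.CoprodI Gs, ∃! s, s ∈ S ∧ ∃ a ∈ A, ∃ b ∈ B, g = a * s * b) :
    (∑' s : S,
        (grank ↥(A ⊓ Subgroup.map (MulAut.conj (s : Monoid.CoprodI Gs)).toMonoidHom B)
          - 1) ≤ (grank A - 1) * (grank B - 1)) ∧
      grank ↥(A ⊓ B) - 1 ≤ (grank A - 1) * (grank B - 1) :=
  AMS_strengthened_hanna_neumann_general Gs hLO A B hA hB S hS
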